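/- arXiv:1211.2118 — 2 statements merged into one kernel-verified Lean document; each statement's English description precedes it below -/
import Mathlib

section
/- Let S be a finite set of n ≥ 1 pairwise disjoint nondegenerate closed line segments in ℝ², such that no three of the 2n segment endpoints lie on a common line. Then there exists a simple graph T on the set V of the 2n segment endpoints such that: T is a tree (connected and acyclic); for every segment of S, its two endpoints form an edge of T; every vertex of T has degree at most 3; and the edges of T, drawn as closed straight segments between their endpoints, are pairwise non-crossing: any two distinct edge segments intersect only in a shared endpoint, and no edge segment contains a point of V other than its two endpoints. -/
open Set

/-- Degree of a vertex in a graph. -/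
noncomputable def ndeg {V : Type*} (G : SimpleGraph V) (v : V) : ℕ := {w | G.Adj v w}.ncard

/-- Combinatorial-geometric configuration of non-vertical segments given as affine graphs. -/
structure Cf (ι : Type) where
  L : ι → ℝ
  R : ι → ℝ
  A : ι → ℝ
  B : ι → ℝ
  bot : ι
  top : ι
  bt : bot ≠ top
  lr : ∀ i, L i < R i
  dj : ∀ i j x, i ≠ j → L i ≤ x → x ≤ R i → L j ≤ x → x ≤ R j →
    A i * x + B i ≠ A j * x + B j
  bd : ∀ i, i ≠ bot → i ≠ top → L bot < L i ∧ L top < L i ∧ R i < R bot ∧ R i < R top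
  bF : ∀ i x, i ≠ bot → L i ≤ x → x ≤ R i → A bot * x + B bot < A i * x + B i
  tF : ∀ i x, i ≠ top → L i ≤ x → x ≤ R i → A i * x + B i < A top * x + B top
  inj : ∀ i b j b', i ≠ bot → i ≠ top → j ≠ bot → j ≠ top →
    (bif b then R i else L i) = (bif b' then R j else L j) → i = j ∧ b = b'

namespace Cf
variable {ι : Type} (c : Cf ι)

def F (i : ι) (x : ℝ) : ℝ := c.A i * x + c.B i
def X (v : ι × Bool) : ℝ := bif v.2 then c.R v.1 else c.L v.1
def Y (v : ι × Bool) : ℝ := c.F v.1 (c.X v)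
def Real (v : ι × Bool) : Prop := v.1 ≠ c.bot ∧ v.1 ≠ c.top
def Free (l u : ι) (a b : ℝ) : Prop :=
  ∀ x, a < x → x < b → ∀ s, c.L s ≤ x → x ≤ c.R s → c.F s x ≤ c.F l x ∨ c.F u x ≤ c.F s x

structure Trap (l u : ι) (h w : ι × Bool) : Prop where
  hw : c.X h < c.X w
  ne : h.1 ≠ w.1
  Ll : c.L l ≤ c.X h
  Lu : c.L u ≤ c.X h
  Rl : c.X w ≤ c.R l
  Ru : c.X w ≤ c.R u
  lh : c.F l (c.X h) ≤ c.Y h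
  hu : c.Y h ≤ c.F u (c.X h)
  lw : c.F l (c.X w) ≤ c.Y w
  wu : c.Y w ≤ c.F u (c.X w)
  free : c.Free l u (c.X h) (c.X w)

def On (h w : ι × Bool) (x y : ℝ) : Prop :=
  c.X h ≤ x ∧ x ≤ c.X w ∧ y * (c.X w - c.X h) = c.Y h * (c.X w - x) + c.Y w * (x - c.X h)

lemma dj' {i j : ι} {x : ℝ} (h1 : c.L i ≤ x) (h2 : x ≤ c.R i) (h3 : c.L j ≤ x)
    (h4 : x ≤ c.R j) (h : c.F i x = c.F j x) : i = j := by
  by_contra hne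
  exact c.dj i j x hne h1 h2 h3 h4 h

lemma XL (v : ι × Bool) : c.L v.1 ≤ c.X v := by
  rcases v with ⟨i, _ | _⟩ <;> simp [X, (c.lr i).le]

lemma XR (v : ι × Bool) : c.X v ≤ c.R v.1 := by
  rcases v with ⟨i, _ | _⟩ <;> simp [X, (c.lr i).le]

lemma inj' {v w : ι × Bool} (hv : c.Real v) (hw : c.Real w) (h : c.X v = c.X w) : v = w := by
  obtain ⟨h1, h2⟩ := c.inj v.1 v.2 w.1 w.2 hv.1 hv.2 hw.1 hw.2 h
  exact Prod.ext h1 h2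

/-- order is constant along a common interval -/
lemma const {i j : ι} {x y : ℝ} (hi : c.L i ≤ x) (hi' : x ≤ c.R i) (hj : c.L j ≤ x)
    (hj' : x ≤ c.R j) (ki : c.L i ≤ y) (ki' : y ≤ c.R i) (kj : c.L j ≤ y)
    (kj' : y ≤ c.R j) (h : c.F i x < c.F j x) : c.F i y < c.F j y := by
  by_contra hcon
  push Not at hcon
  have hne : i ≠ j := by rintro rfl; exact lt_irrefl _ h
  have hcont : ContinuousOn (fun z => c.F i z - c.F j z) (uIcc x y) := by
    unfold F; fun_prop
  have := intermediate_value_uIcc hcont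
  have h0 : (0 : ℝ) ∈ uIcc (c.F i x - c.F j x) (c.F i y - c.F j y) := by
    rw [mem_uIcc]; left; constructor <;> linarith
  obtain ⟨z, hz, hz0⟩ := this h0
  rw [mem_uIcc] at hz
  refine hne (c.dj' (x := z) ?_ ?_ ?_ ?_ (by simpa [sub_eq_zero] using hz0)) <;>
    rcases hz with hz | hz <;> linarith [hz.1, hz.2]

variable {c}

lemma Trap.strict {l u : ι} {h w : ι × Bool} (T : c.Trap l u h w) {x y : ℝ}
    (hx : c.X h < x) (hx' : x < c.X w) (ho : c.On h w x y) : c.F l x < y ∧ y < c.F u x := by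
  obtain ⟨_, _, ho⟩ := ho
  have hne := T.ne
  have e1 : c.F l x * (c.X w - c.X h) = c.F l (c.X h) * (c.X w - x) + c.F l (c.X w) * (x - c.X h) := by
    unfold F; ring
  have e2 : c.F u x * (c.X w - c.X h) = c.F u (c.X h) * (c.X w - x) + c.F u (c.X w) * (x - c.X h) := by
    unfold F; ring
  have p1 : 0 < c.X w - x := by linarith
  have p2 : 0 < x - c.X h := by linarith
  have p3 : 0 < c.X w - c.X h := by linarith
  have hwlt := T.hw
  constructor
  · rw [← mul_lt_mul_iff_left₀ p3, ho, e1]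
    rcases T.lh.lt_or_eq with h1 | h1
    · nlinarith [T.lw]
    · rcases T.lw.lt_or_eq with h2 | h2
      · nlinarith [T.lh]
      · exfalso
        have a1 := c.dj' T.Ll (by linarith [T.Rl]) (c.XL h) (c.XR h) h1
        have a2 := c.dj' (by linarith [T.Ll]) T.Rl (c.XL w) (c.XR w) h2
        exact hne (a1.symm.trans a2)
  · rw [← mul_lt_mul_iff_left₀ p3, ho, e2]
    rcases T.hu.lt_or_eq with h1 | h1
    · nlinarith [T.wu]
    · rcases T.wu.lt_or_eq with h2 | h2
      · nlinarith [T.hu]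
      · exfalso
        have a1 := c.dj' (c.XL h) (c.XR h) T.Lu (by linarith [T.Ru]) h1
        have a2 := c.dj' (c.XL w) (c.XR w) (by linarith [T.Lu]) T.Ru h2
        exact hne (a1.trans a2.symm)

lemma On.left {h w : ι × Bool} (hw : c.X h < c.X w) {y : ℝ} (o : c.On h w (c.X h) y) :
    y = c.Y h := by
  have := o.2.2
  have p : c.X w - c.X h ≠ 0 := by linarith
  apply mul_right_cancel₀ p
  linarith

lemma On.right {h w : ι × Bool} (hw : c.X h < c.X w) {y : ℝ} (o : c.On h w (c.X w) y) :
    y = c.Y w := by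
  have := o.2.2
  have p : c.X w - c.X h ≠ 0 := by linarith
  apply mul_right_cancel₀ p
  linarith

/-- segment versus connecting edge -/
lemma Trap.seg {l u : ι} {h w : ι × Bool} (T : c.Trap l u h w) {x : ℝ} {s : ι}
    (h1 : c.L s ≤ x) (h2 : x ≤ c.R s) (ho : c.On h w x (c.F s x)) :
    (x = c.X h ∧ s = h.1) ∨ (x = c.X w ∧ s = w.1) := by
  rcases ho.1.lt_or_eq with hx | hx
  · rcases ho.2.1.lt_or_eq with hx' | hx'
    · have := T.strict hx hx' ho
      rcases T.free x hx hx' s h1 h2 with h | h <;> linarith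
    · right
      subst hx'
      exact ⟨rfl, c.dj' h1 h2 (c.XL w) (c.XR w) (ho.right T.hw)⟩
  · left
    subst hx
    exact ⟨rfl, c.dj' h1 h2 (c.XL h) (c.XR h) (ho.left T.hw)⟩

lemma Trap.same_aux {l u : ι} {h1 w1 h2 w2 : ι × Bool} (T1 : c.Trap l u h1 w1)
    (T2 : c.Trap l u h2 w2) (r2 : c.Real h2) (v : ι × Bool)
    (hv : c.F l (c.X v) ≤ c.Y v) (hv' : c.Y v ≤ c.F u (c.X v))
    (a : c.X h1 < c.X v) (b : c.X v < c.X w1) : False := by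
  have key : v.1 = l ∨ v.1 = u := by
    rcases T1.free _ a b v.1 (c.XL v) (c.XR v) with h | h
    · left
      exact c.dj' (c.XL v) (c.XR v) (by linarith [T1.Ll]) (by linarith [T1.Rl])
        (le_antisymm h hv)
    · right
      exact c.dj' (c.XL v) (c.XR v) (by linarith [T1.Lu]) (by linarith [T1.Ru])
        (le_antisymm hv' h)
  have e := T1.Ll; have e2 := T1.Lu; have e3 := T1.Rl; have e4 := T1.Ru
  rcases v with ⟨i, _ | _⟩ <;> simp [X] at * <;> rcases key with rfl | rfl <;> linarith

/-- connecting edge versus connecting edge -/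
lemma Trap.trap {l u l' u' : ι} {h w h' w' : ι × Bool} (T : c.Trap l u h w)
    (T' : c.Trap l' u' h' w') (rh : c.Real h) (rw : c.Real w) (rh' : c.Real h')
    (rw' : c.Real w') {x y : ℝ} (o : c.On h w x y) (o' : c.On h' w' x y) :
    (h = h' ∧ w = w') ∨ ((h = h' ∨ h = w') ∧ x = c.X h) ∨ ((w = h' ∨ w = w') ∧ x = c.X w) := by
  have ends : ∀ v : ι × Bool, c.Real v → x = c.X v → y = c.Y v → v = h' ∨ v = w' := by
    intro v rv hx hy
    subst hx; subst hy
    rcases T'.seg (c.XL v) (c.XR v) o' with h | h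
    · left; exact c.inj' rv rh' h.1
    · right; exact c.inj' rv rw' h.1
  have ends' : ∀ v : ι × Bool, c.Real v → x = c.X v → y = c.Y v → v = h ∨ v = w := by
    intro v rv hx hy
    subst hx; subst hy
    rcases T.seg (c.XL v) (c.XR v) o with h | h
    · left; exact c.inj' rv rh h.1
    · right; exact c.inj' rv rw h.1
  rcases o.1.lt_or_eq with hx | hx
  swap
  · right; left
    subst hx
    exact ⟨ends h rh rfl (o.left T.hw), rfl⟩
  rcases o.2.1.lt_or_eq with hx' | hx'
  swap
  · right; right
    subst hx'
    exact ⟨ends w rw rfl (o.right T.hw), rfl⟩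
  rcases o'.1.lt_or_eq with hy | hy
  swap
  · subst hy
    rcases ends' h' rh' rfl (o'.left T'.hw) with e | e <;> subst e <;> exfalso <;> linarith
  rcases o'.2.1.lt_or_eq with hy' | hy'
  swap
  · subst hy'
    rcases ends' w' rw' rfl (o'.right T'.hw) with e | e <;> subst e <;> exfalso <;> linarith
  left
  have s1 := T.strict hx hx' o
  have s2 := T'.strict hy hy' o'
  have t1 := T.Ll; have t2 := T.Lu; have t3 := T.Rl; have t4 := T.Ru
  have t1' := T'.Ll; have t2' := T'.Lu; have t3' := T'.Rl; have t4' := T'.Ru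
  have hl : l = l' := by
    apply c.dj' (x := x) (by linarith) (by linarith) (by linarith) (by linarith)
    apply le_antisymm
    · rcases T'.free x hy hy' l (by linarith) (by linarith) with h | h <;> linarith
    · rcases T.free x hx hx' l' (by linarith) (by linarith) with h | h <;> linarith
  have hu : u = u' := by
    apply c.dj' (x := x) (by linarith) (by linarith) (by linarith) (by linarith)
    apply le_antisymm
    · rcases T.free x hx hx' u' (by linarith) (by linarith) with h | h <;> linarith
    · rcases T'.free x hy hy' u (by linarith) (by linarith) with h | h <;> linarith
  subst hl; subst hu
  constructor
  · apply c.inj' rh rh'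
    rcases lt_trichotomy (c.X h) (c.X h') with h | h | h
    · exact (T.same_aux T' rh' _ T'.lh T'.hu h (by linarith)).elim
    · exact h
    · exact (T'.same_aux T rh _ T.lh T.hu h (by linarith)).elim
  · apply c.inj' rw rw'
    rcases lt_trichotomy (c.X w) (c.X w') with h | h | h
    · exact (T'.same_aux T rh _ T.lw T.wu (by linarith) h).elim
    · exact h
    · exact (T.same_aux T' rh' _ T'.lw T'.wu (by linarith) h).elim

end Cf

namespace Cf
variable {ι : Type} (c : Cf ι)

/-- cut position `τ` separating processed vertices from the others -/
structure Cut (P : Finset (ι × Bool)) (τ : ℝ) : Prop where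
  lo : ∀ v ∈ P, c.X v < τ
  hi : ∀ v, c.Real v → v ∉ P → τ ≤ c.X v
  Lb : c.L c.bot < τ
  Lt : c.L c.top < τ
  Rb : τ < c.R c.bot
  Rt : τ < c.R c.top

structure PendL (l u : ι) (h : ι × Bool) (τ : ℝ) : Prop where
  hu : h.1 ≠ u
  hx : c.X h < τ
  lu : l ≠ u
  Ll : c.L l ≤ c.X h
  Lu : c.L u ≤ c.X h
  Rl : τ ≤ c.R l
  Ru : τ ≤ c.R u
  lh : c.F l (c.X h) ≤ c.Y h
  hF : c.Y h ≤ c.F u (c.X h)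
  free : c.Free l u (c.X h) τ

def Pend (u : ι) (h : ι × Bool) (τ : ℝ) : Prop := ∃ l, c.PendL l u h τ

variable {c}

lemma PendL.ltx {l u : ι} {h : ι × Bool} {τ : ℝ} (p : c.PendL l u h τ) {x : ℝ}
    (h1 : c.X h ≤ x) (h2 : x ≤ τ) : c.F l x < c.F u x := by
  have a1 := p.hx; have a2 := p.Ll; have a3 := p.Lu; have a4 := p.Rl; have a5 := p.Ru
  have a6 := p.lh; have a7 := p.hF
  refine c.const (x := c.X h) a2 (by linarith) a3 (by linarith) (by linarith) (by linarith)
    (by linarith) (by linarith) ?_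
  refine lt_of_le_of_ne (by linarith) ?_
  intro e
  exact p.lu (c.dj' a2 (by linarith) a3 (by linarith) e)

lemma PendL.left {l u : ι} {h : ι × Bool} {τ : ℝ} (p : c.PendL l u h τ) {s : ι}
    (h1 : c.L s < τ) (h2 : τ ≤ c.R s) (k1 : c.F l τ < c.F s τ) (k2 : c.F s τ < c.F u τ) :
    False := by
  have a1 := p.hx; have a2 := p.Ll; have a3 := p.Lu; have a4 := p.Rl; have a5 := p.Ru
  obtain ⟨x, hx, hx'⟩ := exists_between (max_lt h1 a1)
  have b1 := (max_lt_iff.1 hx).1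
  have b2 := (max_lt_iff.1 hx).2
  have c1 : c.F l x < c.F s x := c.const (x := τ) (by linarith) (by linarith) (by linarith)
    (by linarith) (by linarith) (by linarith) (by linarith) (by linarith) k1
  have c2 : c.F s x < c.F u x := c.const (x := τ) (by linarith) (by linarith) (by linarith)
    (by linarith) (by linarith) (by linarith) (by linarith) (by linarith) k2
  rcases p.free x b2 hx' s (by linarith) (by linarith) with h | h <;> linarith

/-- facts about advancing the cut past one vertex `a` -/
structure Adv (c : Cf ι) [DecidableEq ι] (P : Finset (ι × Bool)) (a : ι × Bool) (τ' : ℝ) : Prop where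
  real : c.Real a
  nin : a ∉ P
  cut : c.Cut P (c.X a)
  cut' : c.Cut (insert a P) τ'

variable [DecidableEq ι] {P : Finset (ι × Bool)} {a : ι × Bool} {τ' : ℝ}

lemma Adv.lt (d : c.Adv P a τ') : c.X a < τ' := d.cut'.lo a (by simp)

lemma real_or (c : Cf ι) (s : ι) : s = c.bot ∨ s = c.top ∨ ∀ b, c.Real (s, b) := by
  by_cases h : s = c.bot
  · exact Or.inl h
  by_cases h' : s = c.top
  · exact Or.inr (Or.inl h')
  exact Or.inr (Or.inr fun b => ⟨h, h'⟩)

lemma Leq (ra : c.Real a) (s : ι) (h : c.L s = c.X a) : (s, false) = a := by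
  have := c.bd a.1 ra.1 ra.2
  have h2 := c.XL a
  rcases c.real_or s with rfl | rfl | h'
  · linarith
  · linarith
  · exact c.inj' (h' false) ra h

lemma Req (ra : c.Real a) (s : ι) (h : c.R s = c.X a) : (s, true) = a := by
  have := c.bd a.1 ra.1 ra.2
  have h2 := c.XR a
  rcases c.real_or s with rfl | rfl | h'
  · linarith
  · linarith
  · exact c.inj' (h' true) ra h

/-- a segment alive just after `X a` is alive until `τ'` -/
lemma Adv.R (d : c.Adv P a τ') {s : ι} (h : c.X a < c.R s) : τ' ≤ c.R s := by
  rcases c.real_or s with rfl | rfl | h'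
  · exact d.cut'.Rb.le
  · exact d.cut'.Rt.le
  · refine d.cut'.hi (s, true) (h' _) ?_
    intro hm
    rcases Finset.mem_insert.1 hm with e | e
    · subst e; exact lt_irrefl _ h
    · have := d.cut.lo _ e
      simp [X] at this h
      linarith

lemma Adv.L (d : c.Adv P a τ') {s : ι} (h : c.L s < τ') : c.L s ≤ c.X a := by
  rcases c.real_or s with rfl | rfl | h'
  · exact d.cut.Lb.le
  · exact d.cut.Lt.le
  · by_cases hm : (s, false) ∈ insert a P
    · rcases Finset.mem_insert.1 hm with e | e
      · subst e; simp [X]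
      · exact (d.cut.lo _ e).le
    · have := d.cut'.hi _ (h' false) hm
      simp [X] at this
      linarith

lemma Adv.free (d : c.Adv P a τ') {l u : ι} (Ll : c.L l ≤ c.X a) (Lu : c.L u ≤ c.X a)
    (Rl : τ' ≤ c.R l) (Ru : τ' ≤ c.R u)
    (h : ∀ s, c.L s ≤ c.X a → c.X a < c.R s →
      c.F s (c.X a) ≤ c.F l (c.X a) ∨ c.F u (c.X a) ≤ c.F s (c.X a)) :
    c.Free l u (c.X a) τ' := by
  intro x hx hx' s h1 h2
  have hL := d.L (s := s) (by linarith)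
  by_contra! hcon
  have c1 : c.F l (c.X a) < c.F s (c.X a) := c.const (x := x) (by linarith) (by linarith)
    (by linarith) (by linarith) (by linarith) (by linarith) (by linarith) (by linarith) hcon.1
  have c2 : c.F s (c.X a) < c.F u (c.X a) := c.const (x := x) (by linarith) (by linarith)
    (by linarith) (by linarith) (by linarith) (by linarith) (by linarith) (by linarith) hcon.2
  rcases h s hL (by linarith) with h | h <;> linarith

lemma Adv.ext (d : c.Adv P a τ') {l u : ι} {h : ι × Bool} (p : c.PendL l u h (c.X a))
    (Rl : c.R l ≠ c.X a) (Ru : c.R u ≠ c.X a)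
    (hs : ∀ s, c.L s = c.X a →
      c.F s (c.X a) ≤ c.F l (c.X a) ∨ c.F u (c.X a) ≤ c.F s (c.X a)) :
    c.PendL l u h τ' := by
  have a1 := p.hx; have a2 := p.Ll; have a3 := p.Lu; have a4 := p.Rl; have a5 := p.Ru
  have r1 := d.R (lt_of_le_of_ne a4 Rl.symm)
  have r2 := d.R (lt_of_le_of_ne a5 Ru.symm)
  have key : ∀ s, c.L s ≤ c.X a → c.X a ≤ c.R s →
      c.F s (c.X a) ≤ c.F l (c.X a) ∨ c.F u (c.X a) ≤ c.F s (c.X a) := by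
    intro s h1 h2
    rcases h1.lt_or_eq with h1 | h1
    · by_contra! hcon
      exact p.left h1 h2 hcon.1 hcon.2
    · exact hs s h1
  have fr := d.free (l := l) (u := u) (by linarith) (by linarith) r1 r2
    (fun s h1 h2 => key s h1 h2.le)
  have := d.lt
  refine ⟨p.hu, by linarith, p.lu, a2, a3, r1, r2, p.lh, p.hF, ?_⟩
  intro x hx hx' s h1 h2
  rcases lt_trichotomy x (c.X a) with h | h | h
  · exact p.free x hx h s h1 h2
  · subst h; exact key s h1 h2
  · exact fr x h hx' s h1 h2

end Cf

namespace Cf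
variable {ι : Type} {c : Cf ι}

lemma exists_up [Fintype ι] {a : ι × Bool} (ra : c.Real a) : ∃ u, c.L u ≤ c.X a ∧ c.X a < c.R u ∧
    c.Y a < c.F u (c.X a) ∧ ∀ s, c.L s ≤ c.X a → c.X a < c.R s → c.Y a < c.F s (c.X a) →
      c.F u (c.X a) ≤ c.F s (c.X a) := by
  classical
  let A : Finset ι := Finset.univ.filter (fun u => c.L u ≤ c.X a ∧ c.X a < c.R u ∧
    c.Y a < c.F u (c.X a))
  have b := c.bd a.1 ra.1 ra.2
  have h1 := c.XL a; have h2 := c.XR a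
  have hA : A.Nonempty := ⟨c.top, by
    simp only [A, Finset.mem_filter, Finset.mem_univ, true_and]
    refine ⟨by linarith, by linarith, ?_⟩
    exact c.tF a.1 _ ra.2 h1 h2⟩
  obtain ⟨u, hu, hm⟩ := A.exists_min_image (fun u => c.F u (c.X a)) hA
  simp only [A, Finset.mem_filter, Finset.mem_univ, true_and] at hu hm
  exact ⟨u, hu.1, hu.2.1, hu.2.2, fun s x y z => hm s ⟨x, y, z⟩⟩

lemma exists_lo [Fintype ι] {a : ι × Bool} (ra : c.Real a) : ∃ u, c.L u ≤ c.X a ∧ c.X a < c.R u ∧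
    c.F u (c.X a) < c.Y a ∧ ∀ s, c.L s ≤ c.X a → c.X a < c.R s → c.F s (c.X a) < c.Y a →
      c.F s (c.X a) ≤ c.F u (c.X a) := by
  classical
  let A : Finset ι := Finset.univ.filter (fun u => c.L u ≤ c.X a ∧ c.X a < c.R u ∧
    c.F u (c.X a) < c.Y a)
  have b := c.bd a.1 ra.1 ra.2
  have h1 := c.XL a; have h2 := c.XR a
  have hA : A.Nonempty := ⟨c.bot, by
    simp only [A, Finset.mem_filter, Finset.mem_univ, true_and]
    refine ⟨by linarith, by linarith, ?_⟩
    exact c.bF a.1 _ ra.1 h1 h2⟩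
  obtain ⟨u, hu, hm⟩ := A.exists_max_image (fun u => c.F u (c.X a)) hA
  simp only [A, Finset.mem_filter, Finset.mem_univ, true_and] at hu hm
  exact ⟨u, hu.1, hu.2.1, hu.2.2, fun s x y z => hm s ⟨x, y, z⟩⟩

end Cf

namespace CfComb
open Relation
variable {α ι : Type}

lemma eqv_mono {r r' : α → α → Prop} (h : ∀ x y, r x y → EqvGen r' x y) {x y : α}
    (e : EqvGen r x y) : EqvGen r' x y := by
  induction e with
  | rel x y hxy => exact h x y hxy
  | refl x => exact EqvGen.refl x
  | symm x y _ ih => exact ih.symm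
  | trans x y z _ _ i1 i2 => exact i1.trans _ _ _ i2

lemma exch {r r0 : α → α → Prop} {h u : α} (H : ∀ x y, r x y → r0 x y ∨ (x = h ∧ y = u)) {x y : α}
    (e : EqvGen r x y) : EqvGen r0 x y ∨ (EqvGen r0 x h ∧ EqvGen r0 u y) ∨
      (EqvGen r0 x u ∧ EqvGen r0 h y) := by
  induction e with
  | rel x y hxy =>
    rcases H x y hxy with h | ⟨rfl, rfl⟩
    · exact Or.inl (EqvGen.rel _ _ h)
    · exact Or.inr (Or.inl ⟨EqvGen.refl _, EqvGen.refl _⟩)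
  | refl x => exact Or.inl (EqvGen.refl x)
  | symm x y _ ih =>
    rcases ih with h | ⟨h, h'⟩ | ⟨h, h'⟩
    · exact Or.inl h.symm
    · exact Or.inr (Or.inr ⟨h'.symm, h.symm⟩)
    · exact Or.inr (Or.inl ⟨h'.symm, h.symm⟩)
  | trans x y z _ _ i1 i2 =>
    rcases i1 with h | ⟨h, h'⟩ | ⟨h, h'⟩ <;> rcases i2 with k | ⟨k, k'⟩ | ⟨k, k'⟩
    · exact Or.inl (h.trans _ _ _ k)
    · exact Or.inr (Or.inl ⟨h.trans _ _ _ k, k'⟩)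
    · exact Or.inr (Or.inr ⟨h.trans _ _ _ k, k'⟩)
    · exact Or.inr (Or.inl ⟨h, h'.trans _ _ _ k⟩)
    · exact Or.inr (Or.inl ⟨h, k'⟩)
    · exact Or.inl (h.trans _ _ _ k')
    · exact Or.inr (Or.inr ⟨h, h'.trans _ _ _ k⟩)
    · exact Or.inl (h.trans _ _ _ k')
    · exact Or.inr (Or.inr ⟨h, k'⟩)

/-- the segments, the connecting edges and the promised edges -/
def rel (E : Finset ((ι × Bool) × (ι × Bool))) (p : ι → Option (ι × Bool)) (v w : ι × Bool) : Prop :=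
  (∃ i, v = (i, false) ∧ w = (i, true)) ∨ (v, w) ∈ E ∨ ∃ u, p u = some v ∧ w = (u, false)

variable [DecidableEq ι] [Fintype ι]

def deg (E : Finset ((ι × Bool) × (ι × Bool))) (v : ι × Bool) : ℕ :=
  (E.filter (fun e => e.1 = v ∨ e.2 = v)).card

def cnt (p : ι → Option (ι × Bool)) (v : ι × Bool) : ℕ :=
  (Finset.univ.filter (fun u => p u = some v)).card

def bud (E : Finset ((ι × Bool) × (ι × Bool))) (p : ι → Option (ι × Bool)) (v : ι × Bool) : ℕ :=
  deg E v + cnt p v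

variable {E : Finset ((ι × Bool) × (ι × Bool))} {p : ι → Option (ι × Bool)}

lemma cnt_none (u : ι) (v : ι × Bool) :
    cnt (Function.update p u none) v + (if p u = some v then 1 else 0) = cnt p v := by
  unfold cnt
  have : (Finset.univ.filter (fun x => Function.update p u none x = some v)) =
      (Finset.univ.filter (fun x => p x = some v)).erase u := by
    ext x
    by_cases h : x = u <;> simp [h]
  rw [this]
  split_ifs with h
  · exact Finset.card_erase_add_one (by simpa using h)
  · rw [Finset.erase_eq_of_notMem (by simpa using h)]; rfl

lemma cnt_some (u : ι) (a v : ι × Bool) (hp : p u = none) :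
    cnt (Function.update p u (some a)) v = cnt p v + if v = a then 1 else 0 := by
  have := cnt_none (p := Function.update p u (some a)) u v
  simp only [Function.update_idem, Function.update_self] at this
  rw [← hp, Function.update_eq_self] at this
  rw [← this]
  simp [eq_comm]

lemma deg_ins (h a v : ι × Bool) :
    deg (insert (h, a) E) v ≤ deg E v + (if h = v then 1 else 0) + (if v = a then 1 else 0) := by
  unfold deg
  rw [Finset.filter_insert]
  dsimp only
  by_cases h1 : h = v
  · simp only [h1, true_or, if_true]
    have := Finset.card_insert_le (v, a) (E.filter (fun e => e.1 = v ∨ e.2 = v))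
    omega
  · by_cases h2 : a = v
    · have := Finset.card_insert_le (h, v) (E.filter (fun e => e.1 = v ∨ e.2 = v))
      simp [h1, h2]; omega
    · simp [h1, h2, eq_comm]

lemma bud_A {u : ι} {h : ι × Bool} (hp : p u = some h) (a v : ι × Bool) :
    bud (insert (h, a) E) (Function.update p u none) v ≤ bud E p v + if v = a then 1 else 0 := by
  have h1 := deg_ins (E := E) h a v
  have h2 := cnt_none (p := p) u v
  simp only [hp, Option.some.injEq] at h2
  unfold bud
  omega

lemma bud_B {u : ι} (hp : p u = none) (a v : ι × Bool) :
    bud E (Function.update p u (some a)) v ≤ bud E p v + if v = a then 1 else 0 := by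
  have h1 := cnt_some (p := p) u a v hp
  unfold bud
  omega

lemma bud_C (u : ι) (v : ι × Bool) :
    bud E (Function.update p u none) v ≤ bud E p v := by
  have h1 := cnt_none (p := p) u v
  unfold bud
  omega

lemma rel_drop {u : ι} {h : ι × Bool} (hp : p u = some h) (x y : ι × Bool) (e : rel E p x y) :
    rel E (Function.update p u none) x y ∨ (x = h ∧ y = (u, false)) := by
  rcases e with e | e | ⟨u', e, e'⟩
  · exact Or.inl (Or.inl e)
  · exact Or.inl (Or.inr (Or.inl e))
  · by_cases hu : u' = u
    · subst hu
      rw [hp] at e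
      exact Or.inr ⟨(Option.some.inj e).symm, e'⟩
    · exact Or.inl (Or.inr (Or.inr ⟨u', by simp [hu, e], e'⟩))

lemma rel_mono {E' : Finset ((ι × Bool) × (ι × Bool))} {p' : ι → Option (ι × Bool)}
    (hE : E ⊆ E') (hp : ∀ u h, p u = some h → p' u = some h) (x y : ι × Bool) (e : rel E p x y) :
    rel E' p' x y := by
  rcases e with e | e | ⟨u', e, e'⟩
  · exact Or.inl e
  · exact Or.inr (Or.inl (hE e))
  · exact Or.inr (Or.inr ⟨u', hp _ _ e, e'⟩)

lemma upd_none_le {u : ι} (q : Option (ι × Bool)) (x : ι) (h : ι × Bool)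
    (e : Function.update p u none x = some h) : Function.update p u q x = some h := by
  by_cases hx : x = u
  · subst hx; simp at e
  · simpa [hx] using e

/-- reconnecting: if in the relation with the promise dropped plus new stuff, `h` and `u` are
joined, then connectivity survives -/
lemma reconn {u : ι} {h : ι × Bool} (hp : p u = some h) {E' : Finset ((ι × Bool) × (ι × Bool))}
    {p' : ι → Option (ι × Bool)} (hE : E ⊆ E')
    (hp' : ∀ x h, Function.update p u none x = some h → p' x = some h)
    (hc : EqvGen (rel E' p') h (u, false)) {x y : ι × Bool} (e : EqvGen (rel E p) x y) :
    EqvGen (rel E' p') x y := by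
  refine eqv_mono ?_ e
  intro x y hxy
  rcases rel_drop hp x y hxy with h1 | ⟨rfl, rfl⟩
  · exact EqvGen.rel _ _ (rel_mono hE hp' _ _ h1)
  · exact hc

end CfComb

namespace Cf
open Relation CfComb
variable {ι : Type} [DecidableEq ι] [Fintype ι]

/-- sweep state -/
structure St (c : Cf ι) (P : Finset (ι × Bool)) (E : Finset ((ι × Bool) × (ι × Bool)))
    (p : ι → Option (ι × Bool)) : Prop where
  real : ∀ v ∈ P, c.Real v
  edge : ∀ e ∈ E, e.1 ∈ P ∧ e.2 ∈ P ∧ ∃ l u, c.Trap l u e.1 e.2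
  pen : ∀ u h, p u = some h → h ∈ P
  pend : ∀ τ, c.Cut P τ → ∀ u h, p u = some h → c.Pend u h τ
  conn : ∀ v ∈ P, EqvGen (rel E p) v (c.top, false)
  bud : ∀ v, bud E p v ≤ 2

variable {c : Cf ι} {P : Finset (ι × Bool)} {E : Finset ((ι × Bool) × (ι × Bool))}
    {p : ι → Option (ι × Bool)}

lemma St.bud0 (σ : c.St P E p) {a : ι × Bool} (ha : a ∉ P) : CfComb.bud E p a = 0 := by
  unfold CfComb.bud deg cnt
  rw [Finset.filter_eq_empty_iff.2, Finset.filter_eq_empty_iff.2]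
  · simp
  · intro u _ h
    exact ha (σ.pen _ _ h)
  · rintro e he (h | h)
    · exact ha (h ▸ (σ.edge e he).1)
    · exact ha (h ▸ (σ.edge e he).2.1)

lemma St.start (σ : c.St P E p) {t : ι} {a : ι × Bool} (ha : a = (t, false)) (ra : c.Real a)
    (nin : a ∉ P) (cut : c.Cut P (c.X a)) : ∃ E' p', c.St (insert a P) E' p' := by
  obtain ⟨u, Lu', Ru, Fu, umin⟩ := c.exists_up ra
  have a1 : a.1 = t := by rw [ha]
  have Xa : c.X a = c.L t := by rw [ha]; rfl
  have Ya : c.Y a = c.F t (c.X a) := by rw [← a1]; rfl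
  have lrt := c.lr t
  have ut : u ≠ t := by
    rintro rfl; linarith
  have noR : ∀ l, c.R l ≠ c.X a := by
    intro l h
    have := Req ra l h
    rw [ha] at this
    simp at this
  have Lu : c.L u < c.X a := by
    refine lt_of_le_of_ne Lu' fun h => ut ?_
    have := Leq ra u h
    rw [ha] at this
    simpa using this
  have uP : u = c.top ∨ (u, false) ∈ P := by
    rcases c.real_or u with h | h | h
    · subst h
      have := c.bF a.1 (c.X a) ra.1 (c.XL a) (c.XR a)
      change c.F _ _ < c.Y a at this
      linarith
    · exact Or.inl h
    · right
      by_contra hn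
      have := cut.hi _ (h false) hn
      simp only [X, cond_false] at this Lu
      linarith
  have b0 := σ.bud0 nin
  have phase : ∃ E1 p1, p1 u = none ∧ (∀ x, x ≠ u → p1 x = p x) ∧
      (∀ v, CfComb.bud E1 p1 v ≤ CfComb.bud E p v + if v = a then 1 else 0) ∧ E ⊆ E1 ∧
      (∀ h, p u = some h → (h, a) ∈ E1) ∧
      (∀ e ∈ E1, e.1 ∈ insert a P ∧ e.2 ∈ insert a P ∧ ∃ l u, c.Trap l u e.1 e.2) := by
    have oldE : ∀ e ∈ E, e.1 ∈ insert a P ∧ e.2 ∈ insert a P ∧ ∃ l u, c.Trap l u e.1 e.2 :=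
      fun e he => ⟨Finset.mem_insert_of_mem (σ.edge e he).1,
        Finset.mem_insert_of_mem (σ.edge e he).2.1, (σ.edge e he).2.2⟩
    rcases hpu : p u with _ | h
    · refine ⟨E, p, hpu, fun _ _ => rfl, fun v => by omega, subset_rfl, by simp, oldE⟩
    · refine ⟨insert (h, a) E, Function.update p u none, by simp, fun x hx => by simp [hx],
        fun v => bud_A hpu a v, Finset.subset_insert _ _, ?_, ?_⟩
      · intro h' e
        obtain rfl := Option.some.inj e
        simp
      · intro e he
        rcases Finset.mem_insert.1 he with rfl | he
        swap
        · exact oldE e he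
        have hP := σ.pen _ _ hpu
        obtain ⟨l, pl⟩ := σ.pend _ cut _ _ hpu
        have q1 := pl.hx; have q2 := pl.Ll; have q3 := pl.Lu; have q4 := pl.Rl; have q5 := pl.Ru
        have q6 := pl.ltx q1.le le_rfl
        refine ⟨Finset.mem_insert_of_mem hP, by simp, l, u, q1, ?_, q2, q3, q4, q5, pl.lh, pl.hF,
          ?_, Fu.le, pl.free⟩
        · intro e
          have k1 := c.XL h
          have k2 := c.XR h
          dsimp only at e
          rw [e, a1] at k1
          linarith
        · by_contra! hcon
          have := umin l (by linarith) (lt_of_le_of_ne q4 (noR l).symm) hcon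
          linarith
  obtain ⟨E1, p1, p1u, p1o, b1, hE, hhE, edge⟩ := phase
  refine ⟨E1, Function.update p1 u (some a), ?_, edge, ?_, ?_, ?_, ?_⟩
  · intro v hv
    rcases Finset.mem_insert.1 hv with rfl | hv
    · exact ra
    · exact σ.real v hv
  · intro x h hx
    by_cases e : x = u
    · subst e
      simp at hx
      subst hx; simp
    · simp [e, p1o x e] at hx
      exact Finset.mem_insert_of_mem (σ.pen _ _ hx)
  · intro τ' cut' x h hx
    have d : c.Adv P a τ' := ⟨ra, nin, cut, cut'⟩
    by_cases e : x = u
    · subst e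
      simp at hx
      subst hx
      have r1 := d.R (s := t) (by linarith)
      have r2 := d.R (s := x) Ru
      refine ⟨t, by rw [a1]; exact ut.symm, d.lt, ut.symm, Xa.ge, Lu', r1, r2, Ya.ge, Fu.le, ?_⟩
      refine d.free Xa.ge Lu' r1 r2 ?_
      intro s h1 h2
      by_contra! hcon
      have := umin s h1 h2 (by linarith)
      linarith
    · simp [e, p1o x e] at hx
      obtain ⟨l, pl⟩ := σ.pend _ cut _ _ hx
      refine ⟨l, d.ext pl (noR _) (noR _) ?_⟩
      intro s hs
      have hst : s = t := by
        have := Leq ra s hs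
        rw [ha] at this
        simpa using this
      subst hst
      by_contra! hcon
      have q1 := pl.hx; have q2 := pl.Ll; have q3 := pl.Lu; have q4 := pl.Rl; have q5 := pl.Ru
      have f := umin x (by linarith) (lt_of_le_of_ne q5 (noR x).symm) (by linarith)
      have f' : c.F u (c.X a) < c.F x (c.X a) := by
        refine lt_of_le_of_ne f fun h => e ?_
        exact (c.dj' Lu' Ru.le (by linarith) q5 h).symm
      exact pl.left Lu Ru.le (by linarith) f'
  · have au : EqvGen (rel E1 (Function.update p1 u (some a))) a (u, false) :=
      EqvGen.rel _ _ (Or.inr (Or.inr ⟨u, by simp, rfl⟩))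
    have old : ∀ v ∈ P, EqvGen (rel E1 (Function.update p1 u (some a))) v (c.top, false) := by
      intro v hv
      refine eqv_mono ?_ (σ.conn v hv)
      rintro x y (h | h | ⟨u', h, rfl⟩)
      · exact EqvGen.rel _ _ (Or.inl h)
      · exact EqvGen.rel _ _ (Or.inr (Or.inl (hE h)))
      · by_cases e : u' = u
        · subst e
          exact EqvGen.trans _ _ _ (EqvGen.rel x a (Or.inr (Or.inl (hhE _ h)))) au
        · exact EqvGen.rel _ _ (Or.inr (Or.inr ⟨u', by simp [e, p1o u' e, h], rfl⟩))
    intro v hv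
    rcases Finset.mem_insert.1 hv with rfl | hv
    · rcases uP with h | h
      · rw [h] at au; rw [h]; exact au
      · exact au.trans _ _ _ (old _ h)
    · exact old v hv
  · intro v
    have h1 := bud_B (E := E1) p1u a v
    have h2 := b1 v
    have h3 := σ.bud v
    by_cases e : v = a
    · subst e; simp at h1 h2; omega
    · simp [e] at h1 h2; omega

end Cf

namespace Cf
open Relation CfComb
variable {ι : Type} [DecidableEq ι] [Fintype ι]
variable {c : Cf ι} {P : Finset (ι × Bool)} {E : Finset ((ι × Bool) × (ι × Bool))}
    {p : ι → Option (ι × Bool)}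

lemma St.finish1 (σ : c.St P E p) {s : ι} {a : ι × Bool} (ha : a = (s, true)) (ra : c.Real a)
    (nin : a ∉ P) (cut : c.Cut P (c.X a)) : ∃ E1 p1, p1 s = none ∧
      (∀ x h, p1 x = some h → p x = some h) ∧
      (∀ v, CfComb.bud E1 p1 v ≤ CfComb.bud E p v + if v = a then 1 else 0) ∧
      (∀ e ∈ E1, e.1 ∈ insert a P ∧ e.2 ∈ insert a P ∧ ∃ l u, c.Trap l u e.1 e.2) ∧
      (∀ v ∈ insert a P, EqvGen (rel E1 p1) v (c.top, false)) := by
  have a1 : a.1 = s := by rw [ha]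
  have Ya : c.Y a = c.F s (c.X a) := by rw [← a1]; rfl
  have sP : (s, false) ∈ P := by
    by_contra hn
    have := cut.hi (s, false) (by rw [ha] at ra; exact ra) hn
    have h2 := c.lr s
    rw [ha] at this
    simp [X] at this
    linarith
  have oldE : ∀ e ∈ E, e.1 ∈ insert a P ∧ e.2 ∈ insert a P ∧ ∃ l u, c.Trap l u e.1 e.2 :=
    fun e he => ⟨Finset.mem_insert_of_mem (σ.edge e he).1,
      Finset.mem_insert_of_mem (σ.edge e he).2.1, (σ.edge e he).2.2⟩
  have fin : ∀ E1 p1, (∀ v ∈ P, EqvGen (rel E1 p1) v (c.top, false)) →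
      (∀ v ∈ insert a P, EqvGen (rel E1 p1) v (c.top, false)) := by
    intro E1 p1 h v hv
    rcases Finset.mem_insert.1 hv with rfl | hv
    · refine EqvGen.trans _ _ _ (EqvGen.symm _ _ (EqvGen.rel (s, false) v ?_)) (h _ sP)
      exact Or.inl ⟨s, rfl, ha⟩
    · exact h v hv
  rcases hps : p s with _ | h
  · exact ⟨E, p, hps, fun _ _ h => h, fun v => by omega, oldE, fin _ _ σ.conn⟩
  · refine ⟨insert (h, a) E, Function.update p s none, by simp, ?_, fun v => bud_A hps a v, ?_, ?_⟩
    · intro x h' e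
      have := upd_none_le (p s) x h' e
      simpa using this
    · intro e he
      rcases Finset.mem_insert.1 he with rfl | he
      swap
      · exact oldE e he
      obtain ⟨l, pl⟩ := σ.pend _ cut _ _ hps
      refine ⟨Finset.mem_insert_of_mem (σ.pen _ _ hps), by simp, l, s, pl.hx, ?_, pl.Ll, pl.Lu,
        pl.Rl, pl.Ru, pl.lh, pl.hF, ?_, Ya.le, pl.free⟩
      · dsimp only; rw [a1]; exact pl.hu
      · dsimp only; rw [Ya]; exact (pl.ltx pl.hx.le le_rfl).le
    · refine fin _ _ fun v hv => reconn hps (Finset.subset_insert _ _) (fun _ _ h => h) ?_ (σ.conn v hv)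
      refine EqvGen.trans _ _ _ (EqvGen.rel h a (Or.inr (Or.inl (by simp)))) ?_
      exact EqvGen.symm _ _ (EqvGen.rel _ _ (Or.inl ⟨s, rfl, ha⟩))

lemma St.finish (σ : c.St P E p) {s : ι} {a : ι × Bool} (ha : a = (s, true)) (ra : c.Real a)
    (nin : a ∉ P) (cut : c.Cut P (c.X a)) : ∃ E' p', c.St (insert a P) E' p' := by
  obtain ⟨E1, p1, p1s, p1p, b1, edge, conn⟩ := σ.finish1 ha ra nin cut
  obtain ⟨u, Lu', Ru, Fu, umin⟩ := c.exists_up ra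
  obtain ⟨l, Ll', Rl, Fl, lmax⟩ := c.exists_lo ra
  have a1 : a.1 = s := by rw [ha]
  have Xa : c.X a = c.R s := by rw [ha]; rfl
  have Ya : c.Y a = c.F s (c.X a) := by rw [← a1]; rfl
  have us : u ≠ s := by rintro rfl; linarith
  have noL : ∀ l, c.L l ≠ c.X a := by
    intro l h
    have := Leq ra l h
    rw [ha] at this
    simp at this
  have noR : ∀ x, x ≠ s → c.R x ≠ c.X a := by
    intro x hx h
    have := Req ra x h
    rw [ha] at this
    simp at this
    exact hx this
  have Lu := lt_of_le_of_ne Lu' (noL u)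
  have b0 := σ.bud0 nin
  have real' : ∀ v ∈ insert a P, c.Real v := by
    intro v hv
    rcases Finset.mem_insert.1 hv with rfl | hv
    · exact ra
    · exact σ.real v hv
  have pen1 : ∀ x h, p1 x = some h → h ∈ insert a P := fun x h hx =>
    Finset.mem_insert_of_mem (σ.pen _ _ (p1p _ _ hx))
  have other : ∀ τ', c.Cut (insert a P) τ' → ∀ x h, p1 x = some h → x ≠ u → c.Pend x h τ' := by
    intro τ' cut' x h hx xu
    have d : c.Adv P a τ' := ⟨ra, nin, cut, cut'⟩
    have xs : x ≠ s := by rintro rfl; rw [p1s] at hx; simp at hx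
    obtain ⟨l2, pl⟩ := σ.pend _ cut _ _ (p1p _ _ hx)
    have q1 := pl.hx; have q2 := pl.Ll; have q3 := pl.Lu; have q4 := pl.Rl; have q5 := pl.Ru
    have q6 := pl.ltx q1.le le_rfl
    refine ⟨l2, d.ext pl ?_ (noR x xs) fun s hs => (noL s hs).elim⟩
    apply noR
    rintro rfl
    have f := umin x (by linarith) (lt_of_le_of_ne q5 (noR x xs).symm) (by linarith)
    have f' : c.F u (c.X a) < c.F x (c.X a) := by
      refine lt_of_le_of_ne f fun h => xu ?_
      exact (c.dj' Lu' Ru.le (by linarith) q5 h).symm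
    exact pl.left Lu Ru.le (by linarith) f'
  have a1b : CfComb.bud E1 p1 a ≤ 1 := by
    have := b1 a
    simp at this; omega
  have b2 : ∀ v, CfComb.bud E1 p1 v ≤ 2 := by
    intro v
    have h2 := b1 v
    have h3 := σ.bud v
    by_cases e : v = a
    · subst e; omega
    · simp [e] at h2; omega
  have bfin : ∀ E2 p2, (∀ v, CfComb.bud E2 p2 v ≤ CfComb.bud E1 p1 v + if v = a then 1 else 0) →
      ∀ v, CfComb.bud E2 p2 v ≤ 2 := by
    intro E2 p2 h v
    have h1 := h v
    have h2 := b2 v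
    by_cases e : v = a
    · subst e; simp at h1; omega
    · simp [e] at h1; omega
  rcases hpu : p1 u with _ | h
  · refine ⟨E1, p1, real', edge, pen1, ?_, conn, b2⟩
    intro τ' cut' x h hx
    refine other τ' cut' x h hx ?_
    rintro rfl; rw [hpu] at hx; simp at hx
  have hP := σ.pen _ _ (p1p _ _ hpu)
  by_cases hc : EqvGen (rel E1 (Function.update p1 u none)) a h
  · refine ⟨E1, Function.update p1 u (some a), real', edge, ?_, ?_, ?_, ?_⟩
    · intro x h hx
      by_cases e : x = u
      · subst e; simp at hx; subst hx; simp
      · simp [e] at hx; exact pen1 x h hx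
    · intro τ' cut' x h hx
      by_cases e : x = u
      · subst e; simp at hx; subst hx
        have d : c.Adv P a τ' := ⟨ra, nin, cut, cut'⟩
        have r1 := d.R Rl
        have r2 := d.R Ru
        refine ⟨l, by rw [a1]; exact us.symm, d.lt, ?_, Ll', Lu', r1, r2, Fl.le, Fu.le, ?_⟩
        · rintro rfl; linarith
        refine d.free Ll' Lu' r1 r2 ?_
        intro s' h1 h2
        rcases lt_trichotomy (c.F s' (c.X a)) (c.Y a) with h | h | h
        · exact Or.inl (lmax s' h1 h2 h)
        · exfalso
          have := c.dj' h1 h2.le (c.XL a) (c.XR a) h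
          rw [this, a1] at h2
          linarith
        · exact Or.inr (umin s' h1 h2 h)
      · simp [e] at hx; exact other τ' cut' x h hx e
    · intro v hv
      refine reconn hpu subset_rfl (fun x h e => upd_none_le _ x h e) ?_ (conn v hv)
      refine EqvGen.trans _ a _ (EqvGen.symm _ _ (eqv_mono ?_ hc))
        (EqvGen.rel _ _ (Or.inr (Or.inr ⟨u, by simp, rfl⟩)))
      intro x y hxy
      exact EqvGen.rel _ _ (rel_mono subset_rfl (fun x h e => upd_none_le _ x h e) _ _ hxy)
    · apply bfin
      intro v
      have h1 := bud_C (E := E1) (p := p1) u v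
      have h2 := bud_B (E := E1) (p := Function.update p1 u none) (u := u) (by simp) a v
      simp only [Function.update_idem] at h2
      omega
  · have hs : h.1 ≠ s := by
      intro hh
      apply hc
      rcases h with ⟨i, b⟩
      dsimp only at hh
      subst hh; subst ha
      rcases b with _ | _
      · exact EqvGen.symm _ _ (EqvGen.rel _ _ (Or.inl ⟨i, rfl, rfl⟩))
      · exact EqvGen.refl _
    have hau : EqvGen (rel E1 (Function.update p1 u none)) a (u, false) := by
      have e := EqvGen.trans _ _ _ (conn a (by simp)) (EqvGen.symm _ _ (conn h (by simp [hP])))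
      rcases exch (rel_drop hpu) e with k | ⟨k, _⟩ | ⟨k, _⟩
      · exact (hc k).elim
      · exact (hc k).elim
      · exact k
    refine ⟨insert (h, a) E1, Function.update p1 u none, real', ?_, ?_, ?_, ?_, ?_⟩
    · intro e he
      rcases Finset.mem_insert.1 he with rfl | he
      swap
      · exact edge e he
      obtain ⟨l', pl⟩ := σ.pend _ cut _ _ (p1p _ _ hpu)
      have q1 := pl.hx; have q2 := pl.Ll; have q4 := pl.Rl
      have q6 := pl.ltx q1.le le_rfl
      refine ⟨by simp [hP], by simp, l', u, pl.hx, ?_, pl.Ll, pl.Lu,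
        pl.Rl, pl.Ru, pl.lh, pl.hF, ?_, Fu.le, pl.free⟩
      · dsimp only; rw [a1]; exact hs
      · dsimp only
        by_contra! hcon
        have ls : l' ≠ s := by rintro rfl; linarith
        have := umin l' (by linarith) (lt_of_le_of_ne q4 (noR l' ls).symm) hcon
        linarith
    · intro x h hx
      by_cases e : x = u
      · subst e; simp at hx
      · simp [e] at hx; exact pen1 x h hx
    · intro τ' cut' x h hx
      by_cases e : x = u
      · subst e; simp at hx
      · simp [e] at hx; exact other τ' cut' x h hx e
    · intro v hv
      refine reconn hpu (Finset.subset_insert _ _) (fun x h e => e) ?_ (conn v hv)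
      refine EqvGen.trans _ a _ (EqvGen.rel _ _ (Or.inr (Or.inl (by simp)))) (eqv_mono ?_ hau)
      intro x y hxy
      exact EqvGen.rel _ _ (rel_mono (Finset.subset_insert _ _) (fun x h e => e) _ _ hxy)
    · exact bfin _ _ fun v => bud_A hpu a v

end Cf

namespace Cf
open Relation CfComb
variable {ι : Type} [DecidableEq ι] [Fintype ι]

lemma sweep (c : Cf ι) (Q : Finset (ι × Bool)) (hQ : ∀ v, v ∈ Q ↔ c.Real v) :
    ∃ E p, c.St Q E p := by
  have main : (∀ v ∈ Q, c.Real v) → (∀ v, c.Real v → v ∉ Q → ∀ w ∈ Q, c.X w < c.X v) →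
      ∃ E p, c.St Q E p := by
    clear hQ
    induction Q using Finset.induction_on_max_value c.X with
    | empty =>
      intro _ _
      refine ⟨∅, fun _ => none, by simp, by simp, by simp, by simp, by simp, ?_⟩
      intro v
      simp [bud, deg, cnt]
    | insert a s nin hmax ih =>
      intro h1 h2
      have ra := h1 a (by simp)
      have lt : ∀ w ∈ s, c.X w < c.X a := by
        intro w hw
        refine lt_of_le_of_ne (hmax w hw) fun e => nin ?_
        rwa [← c.inj' (h1 w (by simp [hw])) ra e]
      obtain ⟨E, p, σ⟩ := ih (fun v hv => h1 v (by simp [hv])) (by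
        intro v rv hv w hw
        by_cases e : v = a
        · subst e; exact lt w hw
        · exact h2 v rv (by simp [e, hv]) w (by simp [hw]))
      have b := c.bd a.1 ra.1 ra.2
      have k1 := c.XL a; have k2 := c.XR a
      have cut : c.Cut s (c.X a) := by
        refine ⟨lt, ?_, by linarith, by linarith, by linarith, by linarith⟩
        intro v rv hv
        by_cases e : v = a
        · rw [e]
        · exact (h2 v rv (by simp [e, hv]) a (by simp)).le
      obtain ⟨t, b, hb⟩ : ∃ t b, a = (t, b) := ⟨a.1, a.2, rfl⟩
      rcases b with _ | _
      · exact σ.start hb ra nin cut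
      · exact σ.finish hb ra nin cut
  exact main (fun v hv => (hQ v).1 hv) fun v rv hv => (hv ((hQ v).2 rv)).elim

theorem core (c : Cf ι) : ∃ E : Finset ((ι × Bool) × (ι × Bool)),
    (∀ e ∈ E, c.Real e.1 ∧ c.Real e.2 ∧ ∃ l u, c.Trap l u e.1 e.2) ∧ (∀ v, deg E v ≤ 2) ∧
    ∀ v w, c.Real v → c.Real w → EqvGen (rel E fun _ => none) v w := by
  classical
  let Q : Finset (ι × Bool) := Finset.univ.filter c.Real
  have hQ : ∀ v, v ∈ Q ↔ c.Real v := by simp [Q]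
  obtain ⟨E, p, σ⟩ := c.sweep Q hQ
  refine ⟨E, fun e he => ⟨σ.real _ (σ.edge e he).1, σ.real _ (σ.edge e he).2.1,
    (σ.edge e he).2.2⟩, fun v => le_trans (Nat.le_add_right _ _) (σ.bud v), ?_⟩
  intro v w rv rw
  obtain ⟨τ, hτ⟩ : ∃ τ, c.Cut Q τ := by
    obtain ⟨m, hm, hm'⟩ := Q.exists_max_image c.X ⟨v, (hQ v).2 rv⟩
    have rm := (hQ m).1 hm
    have b := c.bd m.1 rm.1 rm.2
    have k1 := c.XL m; have k2 := c.XR m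
    obtain ⟨τ, h1, h2⟩ := exists_between (lt_min (a := c.X m) (b := c.R c.bot) (c := c.R c.top)
      (by linarith) (by linarith))
    have h3 := (lt_min_iff.1 h2).1
    have h4 := (lt_min_iff.1 h2).2
    exact ⟨τ, fun v hv => lt_of_le_of_lt (hm' v hv) h1, fun v rv hv => (hv ((hQ v).2 rv)).elim,
      by linarith, by linarith, h3, h4⟩
  have only : ∀ u h, p u = some h → u = c.top := by
    intro u h hu
    obtain ⟨l, pl⟩ := σ.pend τ hτ u h hu
    rcases c.real_or u with e | e | e
    · exfalso
      subst e
      have q1 := pl.ltx pl.hx.le le_rfl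
      have q2 := c.bF l τ pl.lu (by linarith [pl.Ll, pl.hx]) pl.Rl
      change c.F c.bot τ < c.F l τ at q2
      linarith
    · exact e
    · exfalso
      have := hτ.lo _ ((hQ _).2 (e true))
      have h2 := pl.Ru
      simp [X] at this
      linarith
  have topinv : ∀ x y, EqvGen (rel E fun _ => none) x y → (x.1 = c.top ↔ y.1 = c.top) := by
    intro x y e
    induction e with
    | rel x y h =>
      rcases h with ⟨i, rfl, rfl⟩ | h | ⟨_, h, _⟩
      · rfl
      · have h1 := (σ.real _ (σ.edge _ h).1).2
        have h2 := (σ.real _ (σ.edge _ h).2.1).2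
        simp only at h1 h2
        simp [h1, h2]
      · simp at h
    | refl x => rfl
    | symm x y _ ih => exact ih.symm
    | trans x y z _ _ i1 i2 => exact i1.trans i2
  rcases hp : p c.top with _ | h
  · exfalso
    have := eqv_mono (r' := rel E fun _ => none) ?_ (σ.conn v ((hQ v).2 rv))
    · exact rv.2 ((topinv _ _ this).2 rfl)
    · intro x y hxy
      refine EqvGen.rel _ _ (rel_mono subset_rfl ?_ _ _ hxy)
      intro u h hu
      rw [only u h hu, hp] at hu
      simp at hu
  · have key : ∀ v, c.Real v → EqvGen (rel E fun _ => none) v h := by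
      intro v rv
      have hd : ∀ x y, rel E p x y → rel E (fun _ => none) x y ∨ (x = h ∧ y = (c.top, false)) := by
        intro x y hxy
        rcases rel_drop hp x y hxy with k | k
        · left
          refine rel_mono subset_rfl ?_ _ _ k
          intro u h hu
          by_cases e : u = c.top
          · subst e; simp at hu
          · simp [e] at hu; exact (e (only _ _ hu)).elim
        · exact Or.inr k
      rcases exch hd (σ.conn v ((hQ v).2 rv)) with k | ⟨k, _⟩ | ⟨k, _⟩
      · exact (rv.2 ((topinv _ _ k).2 rfl)).elim
      · exact k
      · exact (rv.2 ((topinv _ _ k).2 rfl)).elim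
    exact EqvGen.trans _ _ _ (key v rv) (EqvGen.symm _ _ (key w rw))

end Cf

namespace CfComb
open Relation
variable {ι : Type} [DecidableEq ι]

lemma graph {V : Type} [Finite V] [Nonempty V] (φ : V → ι × Bool) (hφ : Function.Injective φ)
    (Rl : ι → Prop) (hr : ∀ x : ι × Bool, Rl x.1 ↔ ∃ a, φ a = x)
    (E : Finset ((ι × Bool) × (ι × Bool))) (hE : ∀ e ∈ E, Rl e.1.1 ∧ Rl e.2.1)
    (hd : ∀ v, deg E v ≤ 2)
    (hc : ∀ a b, EqvGen (rel E fun _ => none) (φ a) (φ b)) :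
    ∃ T : SimpleGraph V, T.IsTree ∧
      (∀ a b i, φ a = (i, false) → φ b = (i, true) → T.Adj a b) ∧
      (∀ a b, T.Adj a b → rel E (fun _ => none) (φ a) (φ b) ∨ rel E (fun _ => none) (φ b) (φ a)) ∧
      ∀ v, ndeg T v ≤ 3 := by
  let H : SimpleGraph V := SimpleGraph.fromRel (fun a b => ∃ i, φ a = (i, false) ∧ φ b = (i, true))
  let G : SimpleGraph V := SimpleGraph.fromRel (fun a b => rel E (fun _ => none) (φ a) (φ b))
  have HG : H ≤ G := by
    intro a b h
    simp only [H, G, SimpleGraph.fromRel_adj] at h ⊢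
    exact ⟨h.1, h.2.imp Or.inl Or.inl⟩
  have Hac : H.IsAcyclic := by
    intro v w hw
    have h1 := w.adj_snd hw.not_nil
    have h2 := w.adj_penultimate hw.not_nil
    apply hw.snd_ne_penultimate
    have key : ∀ x y, H.Adj x y → φ y = ((φ x).1, !(φ x).2) := by
      intro x y h
      simp only [H, SimpleGraph.fromRel_adj] at h
      rcases h.2 with ⟨i, e1, e2⟩ | ⟨i, e1, e2⟩ <;> simp [e1, e2]
    exact hφ ((key _ _ h1).trans (key _ _ h2.symm).symm)
  have Gc : G.Connected := by
    rw [SimpleGraph.connected_iff]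
    refine ⟨?_, inferInstance⟩
    have key : ∀ x y, EqvGen (rel E fun _ => none) x y →
        (Rl x.1 ↔ Rl y.1) ∧ ∀ a b, φ a = x → φ b = y → G.Reachable a b := by
      intro x y e
      induction e with
      | rel x y h =>
        constructor
        · rcases h with ⟨i, rfl, rfl⟩ | h | ⟨_, h, _⟩
          · rfl
          · have := hE _ h
            simp only at this
            simp [this.1, this.2]
          · simp at h
        · rintro a b rfl rfl
          by_cases hab : a = b
          · rw [hab]
          · refine SimpleGraph.Adj.reachable ?_
            simp only [G, SimpleGraph.fromRel_adj]
            exact ⟨hab, Or.inl h⟩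
      | refl x =>
        refine ⟨Iff.rfl, ?_⟩
        rintro a b rfl h
        rw [hφ h]
      | symm x y _ ih => exact ⟨ih.1.symm, fun a b ha hb => (ih.2 b a hb ha).symm⟩
      | trans x y z _ _ i1 i2 =>
        refine ⟨i1.1.trans i2.1, fun a b ha hb => ?_⟩
        obtain ⟨m, hm⟩ := (hr y).1 (i1.1.1 ((hr x).2 ⟨a, ha⟩))
        exact (i1.2 a m ha hm).trans (i2.2 m b hm hb)
    intro a b
    exact (key _ _ (hc a b)).2 a b rfl rfl
  obtain ⟨T, hT⟩ := Gc.exists_isTree_le_of_le_of_isAcyclic HG Hac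
  have hHT : H ≤ T := by tauto
  have hTG : T ≤ G := by tauto
  refine ⟨T, by tauto, ?_, ?_, ?_⟩
  · intro a b i ha hb
    apply hHT
    simp only [H, SimpleGraph.fromRel_adj]
    refine ⟨?_, Or.inl ⟨i, ha, hb⟩⟩
    rintro rfl
    simp [ha] at hb
  · intro a b h
    have := hTG h
    simp only [G, SimpleGraph.fromRel_adj] at this
    exact this.2
  · intro v
    let oth : (ι × Bool) × (ι × Bool) → ι × Bool := fun e => if e.1 = φ v then e.2 else e.1
    let B : Finset (ι × Bool) := insert ((φ v).1, !(φ v).2)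
      ((E.filter (fun e => e.1 = φ v ∨ e.2 = φ v)).image oth)
    have hB : B.card ≤ 3 := by
      refine (Finset.card_insert_le _ _).trans ?_
      have := (Finset.card_image_le (s := E.filter (fun e => e.1 = φ v ∨ e.2 = φ v)) (f := oth)).trans
        (hd (φ v))
      omega
    have sub : φ '' {w | T.Adj v w} ⊆ (B : Set (ι × Bool)) := by
      rintro _ ⟨w, hw, rfl⟩
      have h := hTG hw
      simp only [G, SimpleGraph.fromRel_adj] at h
      simp only [B, Finset.mem_coe, Finset.mem_insert, Finset.mem_image, Finset.mem_filter]
      rcases h with ⟨hne, (⟨i, e1, e2⟩ | h | ⟨_, h, _⟩) | (⟨i, e1, e2⟩ | h | ⟨_, h, _⟩)⟩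
      · left; simp [e1, e2]
      · right; exact ⟨_, ⟨h, Or.inl rfl⟩, by simp [oth]⟩
      · simp at h
      · left; simp [e1, e2]
      · right
        refine ⟨_, ⟨h, Or.inr rfl⟩, ?_⟩
        have : φ w ≠ φ v := fun e => hne (hφ e).symm
        simp [oth, this]
      · simp at h
    unfold ndeg
    rw [← Set.ncard_image_of_injective _ hφ]
    refine (Set.ncard_le_ncard sub B.finite_toSet).trans ?_
    rw [Set.ncard_coe_finset]
    exact hB

end CfComb

namespace Cf
variable {ι : Type} {c : Cf ι}

def Good (c : Cf ι) (h w : ι × Bool) : Prop :=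
  (∃ i, h = (i, false) ∧ w = (i, true)) ∨ ∃ l u, c.Trap l u h w

lemma Good.lt {h w : ι × Bool} (g : c.Good h w) : c.X h < c.X w := by
  rcases g with ⟨i, rfl, rfl⟩ | ⟨l, u, T⟩
  · exact c.lr i
  · exact T.hw

lemma On.line {i : ι} {x y : ℝ} (o : c.On (i, false) (i, true) x y) :
    c.L i ≤ x ∧ x ≤ c.R i ∧ y = c.F i x := by
  obtain ⟨h1, h2, h3⟩ := o
  simp only [X, Y, F, cond_true, cond_false] at *
  refine ⟨h1, h2, ?_⟩
  have := c.lr i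
  have p : c.R i - c.L i ≠ 0 := by linarith
  apply mul_right_cancel₀ p
  rw [h3]; ring

lemma Good.vert {h w v : ι × Bool} (g : c.Good h w) (rh : c.Real h) (rw : c.Real w)
    (rv : c.Real v) (o : c.On h w (c.X v) (c.Y v)) : v = h ∨ v = w := by
  rcases g with ⟨i, rfl, rfl⟩ | ⟨l, u, T⟩
  · obtain ⟨h1, h2, h3⟩ := o.line
    have := c.dj' (c.XL v) (c.XR v) h1 h2 h3
    rcases v with ⟨j, _ | _⟩
    · left; simp at this; rw [this]
    · right; simp at this; rw [this]
  · rcases T.seg (c.XL v) (c.XR v) o with h | h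
    · left; exact c.inj' rv rh h.1
    · right; exact c.inj' rv rw h.1

lemma seg_trap {i l u : ι} {h w : ι × Bool} (T : c.Trap l u h w) {x y : ℝ}
    (o : c.On (i, false) (i, true) x y) (o' : c.On h w x y) :
    ∃ v, (v = (i, false) ∨ v = (i, true)) ∧ (v = h ∨ v = w) ∧ x = c.X v ∧ y = c.Y v := by
  obtain ⟨h1, h2, h3⟩ := o.line
  have hb : ∀ v : ι × Bool, i = v.1 → v = (i, false) ∨ v = (i, true) := by
    rintro ⟨j, _ | _⟩ h
    · left; simp at h; rw [h]
    · right; simp at h; rw [h]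
  subst h3
  rcases T.seg h1 h2 o' with ⟨e, e'⟩ | ⟨e, e'⟩
  · subst e
    exact ⟨h, hb h e', Or.inl rfl, rfl, o'.left T.hw⟩
  · subst e
    exact ⟨w, hb w e', Or.inr rfl, rfl, o'.right T.hw⟩

lemma Good.cross {h w h' w' : ι × Bool} (g : c.Good h w) (g' : c.Good h' w') (rh : c.Real h)
    (rw : c.Real w) (rh' : c.Real h') (rw' : c.Real w') {x y : ℝ} (o : c.On h w x y)
    (o' : c.On h' w' x y) : (h = h' ∧ w = w') ∨
      ∃ v, (v = h ∨ v = w) ∧ (v = h' ∨ v = w') ∧ x = c.X v ∧ y = c.Y v := by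
  rcases g with ⟨i, rfl, rfl⟩ | ⟨l, u, T⟩ <;> rcases g' with ⟨j, rfl, rfl⟩ | ⟨l', u', T'⟩
  · left
    obtain ⟨h1, h2, h3⟩ := o.line
    obtain ⟨k1, k2, k3⟩ := o'.line
    have := c.dj' h1 h2 k1 k2 (h3.symm.trans k3)
    simp [this]
  · exact Or.inr (seg_trap T' o o')
  · obtain ⟨v, a, b, d⟩ := seg_trap T o' o
    exact Or.inr ⟨v, b, a, d⟩
  · rcases T.trap T' rh rw rh' rw' o o' with e | ⟨e, e'⟩ | ⟨e, e'⟩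
    · exact Or.inl e
    · right; subst e'
      exact ⟨h, Or.inl rfl, e, rfl, o.left T.hw⟩
    · right; subst e'
      exact ⟨w, Or.inr rfl, e, rfl, o.right T.hw⟩

/-- adding artificial bottom and top segments -/
lemma build {κ : Type} (L R A B : κ → ℝ) (M : ℝ) (hM : 0 < M) (lr : ∀ i, L i < R i)
    (dj : ∀ i j x, i ≠ j → L i ≤ x → x ≤ R i → L j ≤ x → x ≤ R j →
      A i * x + B i ≠ A j * x + B j)
    (bx : ∀ i, -M < L i ∧ R i < M)
    (bY : ∀ i x, L i ≤ x → x ≤ R i → -M < A i * x + B i ∧ A i * x + B i < M)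
    (inj : ∀ i b j b', (bif b then R i else L i) = (bif b' then R j else L j) → i = j ∧ b = b') :
    ∃ c : Cf (Option (Option κ)), c.bot = none ∧ c.top = some none ∧
      ∀ i, c.L (some (some i)) = L i ∧ c.R (some (some i)) = R i ∧ c.A (some (some i)) = A i ∧
        c.B (some (some i)) = B i := by
  refine ⟨{
    L := fun i => match i with | none => -M | some none => -M | some (some i) => L i
    R := fun i => match i with | none => M | some none => M | some (some i) => R i
    A := fun i => match i with | none => 0 | some none => 0 | some (some i) => A i
    B := fun i => match i with | none => -M | some none => M | some (some i) => B i
    bot := none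
    top := some none
    bt := by simp
    lr := ?_
    dj := ?_
    bd := ?_
    bF := ?_
    tF := ?_
    inj := ?_ }, rfl, rfl, fun i => ⟨rfl, rfl, rfl, rfl⟩⟩
  · rintro (_ | _ | i) <;> dsimp only
    · linarith
    · linarith
    · exact lr i
  · rintro (_ | _ | i) (_ | _ | j) x hne h1 h2 h3 h4 <;> dsimp only at * <;>
      first
      | exact (hne rfl).elim
      | (have := bY _ x h3 h4; intro h; linarith)
      | (have := bY _ x h1 h2; intro h; linarith)
      | (intro h; linarith)
      | exact dj i j x (fun e => hne (by rw [e])) h1 h2 h3 h4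
  · rintro (_ | _ | i) h1 h2
    · simp at h1
    · simp at h2
    · exact ⟨(bx i).1, (bx i).1, (bx i).2, (bx i).2⟩
  · rintro (_ | _ | i) x h1 h2 h3
    · simp at h1
    · dsimp only; linarith
    · have := bY i x h2 h3
      dsimp only; linarith
  · rintro (_ | _ | i) x h1 h2 h3
    · dsimp only; linarith
    · simp at h1
    · have := bY i x h2 h3
      dsimp only; linarith
  · rintro (_ | _ | i) b (_ | _ | j) b' h1 h2 h3 h4 h
    all_goals first | simp at h1; done | simp at h2; done | simp at h3; done | simp at h4; done | skip
    obtain ⟨rfl, rfl⟩ := inj i b j b' h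
    exact ⟨rfl, rfl⟩

end Cf

namespace Cf

def xi (ε : ℝ) (p : ℝ × ℝ) : ℝ := p.1 + ε * p.2

lemma seg_on {ε : ℝ} {a b p : ℝ × ℝ} (hab : xi ε a < xi ε b) (hp : p ∈ segment ℝ a b) :
    xi ε a ≤ xi ε p ∧ xi ε p ≤ xi ε b ∧
      p.2 * (xi ε b - xi ε a) = a.2 * (xi ε b - xi ε p) + b.2 * (xi ε p - xi ε a) := by
  obtain ⟨s, t, hs, ht, hst, rfl⟩ := hp
  have e : xi ε (s • a + t • b) = s * xi ε a + t * xi ε b := by simp [xi]; ring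
  have hs' : s = 1 - t := by linarith
  subst hs'
  rw [e]
  refine ⟨by nlinarith, by nlinarith, ?_⟩
  simp
  ring

lemma on_seg {ε : ℝ} {a b : ℝ × ℝ} (hab : xi ε a < xi ε b) {x y : ℝ} (h1 : xi ε a ≤ x)
    (h2 : x ≤ xi ε b)
    (h3 : y * (xi ε b - xi ε a) = a.2 * (xi ε b - x) + b.2 * (x - xi ε a)) :
    (x - ε * y, y) ∈ segment ℝ a b := by
  have p : 0 < xi ε b - xi ε a := by linarith
  have hy : y = (a.2 * (xi ε b - x) + b.2 * (x - xi ε a)) / (xi ε b - xi ε a) := by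
    rw [eq_div_iff p.ne', h3]
  refine ⟨(xi ε b - x) / (xi ε b - xi ε a), (x - xi ε a) / (xi ε b - xi ε a),
    div_nonneg (by linarith) p.le, div_nonneg (by linarith) p.le, ?_, ?_⟩
  · rw [← add_div, div_eq_one_iff_eq p.ne']; ring
  · ext
    · simp only [Prod.fst_add, Prod.smul_fst, smul_eq_mul]
      rw [hy]
      field_simp
      simp only [xi]
      ring
    · simp only [Prod.snd_add, Prod.smul_snd, smul_eq_mul]
      rw [hy]
      field_simp

lemma xi_ext {ε : ℝ} {p q : ℝ × ℝ} (h1 : xi ε p = xi ε q) (h2 : p.2 = q.2) : p = q := by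
  ext
  · simp only [xi, h2] at h1; linarith
  · exact h2

lemma config {κ : Type} [Finite κ] (ε : ℝ) (pt : κ → Bool → ℝ × ℝ)
    (hlt : ∀ i, xi ε (pt i false) < xi ε (pt i true))
    (hdj : ∀ i j, i ≠ j → segment ℝ (pt i false) (pt i true) ∩ segment ℝ (pt j false) (pt j true) = ∅)
    (hinj : ∀ i b j b', xi ε (pt i b) = xi ε (pt j b') → pt i b = pt j b') :
    ∃ c : Cf (Option (Option κ)), c.bot = none ∧ c.top = some none ∧
      ∀ i b, c.X (some (some i), b) = xi ε (pt i b) ∧ c.Y (some (some i), b) = (pt i b).2 := by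
  obtain ⟨M, hM0, hM⟩ : ∃ M : ℝ, 0 < M ∧ ∀ i b, |xi ε (pt i b)| < M ∧ |(pt i b).2| < M := by
    obtain ⟨M, hM⟩ := (Set.finite_range
      (fun v : κ × Bool => max |xi ε (pt v.1 v.2)| |(pt v.1 v.2).2|)).bddAbove
    refine ⟨max M 0 + 1, by positivity, fun i b => ?_⟩
    have h1 := hM ⟨(i, b), rfl⟩
    have h2 := max_le_iff.1 h1
    have h3 := le_max_left M 0
    constructor <;> linarith [h2.1, h2.2]
  let L : κ → ℝ := fun i => xi ε (pt i false)
  let R : κ → ℝ := fun i => xi ε (pt i true)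
  let A : κ → ℝ := fun i => ((pt i true).2 - (pt i false).2) / (R i - L i)
  let B : κ → ℝ := fun i => (pt i false).2 - A i * L i
  have key : ∀ i x, (A i * x + B i) * (R i - L i) =
      (pt i false).2 * (R i - x) + (pt i true).2 * (x - L i) := by
    intro i x
    have p : R i - L i ≠ 0 := by have := hlt i; simp only [R, L]; linarith
    simp only [A, B]
    field_simp
    ring
  have onseg : ∀ i x, L i ≤ x → x ≤ R i →
      (x - ε * (A i * x + B i), A i * x + B i) ∈ segment ℝ (pt i false) (pt i true) :=
    fun i x h1 h2 => on_seg (hlt i) h1 h2 (key i x)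
  obtain ⟨c, h1, h2, h3⟩ := Cf.build L R A B M hM0 hlt (by
      intro i j x hne a1 a2 a3 a4 e
      have s1 := onseg i x a1 a2
      have s2 := onseg j x a3 a4
      rw [← e] at s2
      have : (x - ε * (A i * x + B i), A i * x + B i) ∈ (∅ : Set (ℝ × ℝ)) := by
        rw [← hdj i j hne]; exact ⟨s1, s2⟩
      simp at this)
    (fun i => ⟨(abs_lt.1 (hM i false).1).1, (abs_lt.1 (hM i true).1).2⟩) (by
      intro i x a1 a2
      have k := key i x
      have p : 0 < R i - L i := by have := hlt i; simp only [R, L]; linarith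
      have m1 := abs_lt.1 (hM i false).2
      have m2 := abs_lt.1 (hM i true).2
      constructor
      · rw [← mul_lt_mul_iff_left₀ p, k]
        rcases a1.lt_or_eq with q | q
        · nlinarith
        · subst q; nlinarith
      · rw [← mul_lt_mul_iff_left₀ p, k]
        rcases a1.lt_or_eq with q | q
        · nlinarith
        · subst q; nlinarith) (by
      intro i b j b' e
      have e' : pt i b = pt j b' := by
        apply hinj
        rcases b with _ | _ <;> rcases b' with _ | _ <;> exact e
      have mem : ∀ i b, pt i b ∈ segment ℝ (pt i false) (pt i true) := by
        intro i b
        rcases b with _ | _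
        · exact left_mem_segment _ _ _
        · exact right_mem_segment _ _ _
      have ij : i = j := by
        by_contra hne
        have : pt i b ∈ (∅ : Set (ℝ × ℝ)) := by
          rw [← hdj i j hne]; exact ⟨mem i b, e' ▸ mem j b'⟩
        simp at this
      subst ij
      refine ⟨rfl, ?_⟩
      have := hlt i
      rcases b with _ | _ <;> rcases b' with _ | _ <;> first | rfl | skip
      · rw [e'] at this; simp at this
      · rw [e'] at this; simp at this)
  refine ⟨c, h1, h2, ?_⟩
  intro i b
  obtain ⟨k1, k2, k3, k4⟩ := h3 i
  have p : R i - L i ≠ 0 := by have := hlt i; simp only [R, L]; linarith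
  have hx : c.X (some (some i), b) = xi ε (pt i b) := by
    rcases b with _ | _
    · exact k1
    · exact k2
  refine ⟨hx, ?_⟩
  simp only [Y, F, hx, k3, k4]
  apply mul_right_cancel₀ p
  rw [key]
  rcases b with _ | _
  · change _ * (R i - L i) + _ * (L i - L i) = _; ring
  · change _ * (R i - R i) + _ * (R i - L i) = _; ring

end Cf

/-- **Encompassing binary trees for disjoint segments** (Bose–Houle–Toussaint).
Let `S` be a finite set of `n ≥ 1` pairwise disjoint nondegenerate closed line segments
in the plane (each segment recorded by its pair of distinct endpoints), with no three of
the `2n` endpoints collinear.  Then there is a tree `T` on the set `V` of all endpoints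
that contains every segment of `S` as an edge, has maximum degree at most `3`, and whose
edges, drawn as closed straight segments, are pairwise non-crossing and contain no
endpoint of `V` other than their own endpoints. -/
theorem binary_encompassing_tree (n : ℕ) (hn : 1 ≤ n) (S : Finset ((ℝ × ℝ) × (ℝ × ℝ)))
    (hcard : S.card = n)
    (hnd : ∀ s ∈ S, s.1 ≠ s.2)
    (hdisj : ∀ s ∈ S, ∀ t ∈ S, s ≠ t →
      segment ℝ s.1 s.2 ∩ segment ℝ t.1 t.2 = ∅)
    (V : Set (ℝ × ℝ)) (hV : V = {x | ∃ s ∈ S, x = s.1 ∨ x = s.2})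
    (hgen : ∀ x ∈ V, ∀ y ∈ V, ∀ z ∈ V, x ≠ y → y ≠ z → x ≠ z →
      ¬ Collinear ℝ ({x, y, z} : Set (ℝ × ℝ))) :
    ∃ T : SimpleGraph V, T.IsTree ∧
      (∀ s ∈ S, ∃ (h₁ : s.1 ∈ V) (h₂ : s.2 ∈ V), T.Adj ⟨s.1, h₁⟩ ⟨s.2, h₂⟩) ∧
      (∀ v : V, ndeg T v ≤ 3) ∧
      (∀ a b c d : V, T.Adj a b → T.Adj c d →
        ({(a : ℝ × ℝ), (b : ℝ × ℝ)} : Set (ℝ × ℝ)) ≠ {(c : ℝ × ℝ), (d : ℝ × ℝ)} →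
        segment ℝ (a : ℝ × ℝ) (b : ℝ × ℝ) ∩ segment ℝ (c : ℝ × ℝ) (d : ℝ × ℝ) ⊆
          ({(a : ℝ × ℝ), (b : ℝ × ℝ)} ∩ {(c : ℝ × ℝ), (d : ℝ × ℝ)} : Set (ℝ × ℝ))) ∧
      (∀ a b : V, T.Adj a b → ∀ v : V, (v : ℝ × ℝ) ∈ segment ℝ (a : ℝ × ℝ) (b : ℝ × ℝ) →
        (v : ℝ × ℝ) = (a : ℝ × ℝ) ∨ (v : ℝ × ℝ) = (b : ℝ × ℝ)) := by
  classical
  let VF : Finset (ℝ × ℝ) := S.image Prod.fst ∪ S.image Prod.snd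
  have hVF : ∀ v, v ∈ V ↔ v ∈ VF := by
    intro v
    rw [hV]
    simp only [VF, Finset.mem_union, Finset.mem_image, Set.mem_setOf_eq]
    constructor
    · rintro ⟨s, hs, h | h⟩
      · exact Or.inl ⟨s, hs, h.symm⟩
      · exact Or.inr ⟨s, hs, h.symm⟩
    · rintro (⟨s, hs, h⟩ | ⟨s, hs, h⟩)
      · exact ⟨s, hs, Or.inl h.symm⟩
      · exact ⟨s, hs, Or.inr h.symm⟩
  have hV1 : ∀ s ∈ S, s.1 ∈ V := fun s hs => by rw [hV]; exact ⟨s, hs, Or.inl rfl⟩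
  have hV2 : ∀ s ∈ S, s.2 ∈ V := fun s hs => by rw [hV]; exact ⟨s, hs, Or.inr rfl⟩
  obtain ⟨ε, hε⟩ : ∃ ε : ℝ, ∀ p ∈ V, ∀ q ∈ V, Cf.xi ε p = Cf.xi ε q → p = q := by
    obtain ⟨ε, h⟩ := Infinite.exists_notMem_finset
      ((VF ×ˢ VF).image (fun z => (z.2.1 - z.1.1) / (z.1.2 - z.2.2)))
    refine ⟨ε, fun p hp q hq e => ?_⟩
    by_cases h2 : p.2 = q.2
    · exact Cf.xi_ext e h2
    · exfalso
      apply h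
      simp only [Finset.mem_image, Finset.mem_product]
      refine ⟨(p, q), ⟨(hVF p).1 hp, (hVF q).1 hq⟩, ?_⟩
      have : p.2 - q.2 ≠ 0 := sub_ne_zero.2 h2
      dsimp only
      rw [div_eq_iff this]
      simp only [Cf.xi] at e
      linarith
  let pt : {s // s ∈ S} → Bool → ℝ × ℝ := fun s b =>
    if Cf.xi ε s.1.1 < Cf.xi ε s.1.2 then (bif b then s.1.2 else s.1.1)
      else (bif b then s.1.1 else s.1.2)
  have hpt : ∀ s : {s // s ∈ S},
      (pt s false = s.1.1 ∧ pt s true = s.1.2 ∧ Cf.xi ε s.1.1 < Cf.xi ε s.1.2) ∨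
      (pt s false = s.1.2 ∧ pt s true = s.1.1 ∧ Cf.xi ε s.1.2 < Cf.xi ε s.1.1) := by
    intro s
    by_cases h : Cf.xi ε s.1.1 < Cf.xi ε s.1.2
    · left; simp [pt, h]
    · right
      refine ⟨by simp [pt, h], by simp [pt, h], lt_of_le_of_ne (not_lt.1 h) fun e => ?_⟩
      exact hnd s.1 s.2 (hε _ (hV1 _ s.2) _ (hV2 _ s.2) e.symm)
  have hptV : ∀ s b, pt s b ∈ V := by
    intro s b
    rcases hpt s with ⟨h1, h2, _⟩ | ⟨h1, h2, _⟩ <;> rcases b with _ | _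
    · rw [h1]; exact hV1 _ s.2
    · rw [h2]; exact hV2 _ s.2
    · rw [h1]; exact hV2 _ s.2
    · rw [h2]; exact hV1 _ s.2
  have hseg : ∀ s, segment ℝ (pt s false) (pt s true) = segment ℝ s.1.1 s.1.2 := by
    intro s
    rcases hpt s with ⟨h1, h2, _⟩ | ⟨h1, h2, _⟩
    · rw [h1, h2]
    · rw [h1, h2, segment_symm]
  obtain ⟨c, cb, ct, cXY⟩ := Cf.config ε pt
    (by
      intro s
      rcases hpt s with ⟨h1, h2, h3⟩ | ⟨h1, h2, h3⟩ <;> rw [h1, h2] <;> exact h3)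
    (by
      intro i j hij
      rw [hseg, hseg]
      exact hdisj _ i.2 _ j.2 fun e => hij (Subtype.ext e))
    (fun i b j b' e => hε _ (hptV i b) _ (hptV j b') e)
  obtain ⟨E, hE, hdeg, hconn⟩ := c.core
  have hex : ∀ v : V, ∃ (i : {s // s ∈ S}) (b : Bool), pt i b = v := by
    rintro ⟨v, hv⟩
    have hv' := hv
    rw [hV] at hv'
    obtain ⟨s, hs, h⟩ := hv'
    rcases hpt ⟨s, hs⟩ with ⟨h1, h2, _⟩ | ⟨h1, h2, _⟩ <;> rcases h with h | h
    · exact ⟨⟨s, hs⟩, false, h1.trans h.symm⟩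
    · exact ⟨⟨s, hs⟩, true, h2.trans h.symm⟩
    · exact ⟨⟨s, hs⟩, true, h2.trans h.symm⟩
    · exact ⟨⟨s, hs⟩, false, h1.trans h.symm⟩
  choose fi fb hf using hex
  let φ : V → Option (Option {s // s ∈ S}) × Bool := fun v => (some (some (fi v)), fb v)
  have hφX : ∀ v, c.X (φ v) = Cf.xi ε v := fun v => by rw [(cXY _ _).1, hf]
  have hφY : ∀ v, c.Y (φ v) = (v : ℝ × ℝ).2 := fun v => by rw [(cXY _ _).2, hf]
  have hφr : ∀ v, c.Real (φ v) := fun v => ⟨by rw [cb]; simp [φ], by rw [ct]; simp [φ]⟩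
  have hφ : Function.Injective φ := by
    intro a b h
    apply Subtype.ext
    rw [← hf a, ← hf b]
    simp only [φ, Prod.mk.injEq, Option.some.injEq] at h
    rw [h.1, h.2]
  have hφpt : ∀ i b, φ ⟨pt i b, hptV i b⟩ = (some (some i), b) := by
    intro i b
    apply c.inj' (hφr _)
    · exact ⟨by rw [cb]; simp, by rw [ct]; simp⟩
    · rw [hφX, (cXY _ _).1]
  have hfinV : V.Finite := by
    refine VF.finite_toSet.subset fun v hv => ?_
    exact (hVF v).1 hv
  haveI : Finite V := hfinV
  haveI : Nonempty V := by
    obtain ⟨s, hs⟩ := Finset.card_pos.1 (show 0 < S.card by omega)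
    exact ⟨⟨s.1, hV1 s hs⟩⟩
  obtain ⟨T, hT, hTs, hTr, hTd⟩ := CfComb.graph φ hφ (fun i => i ≠ c.bot ∧ i ≠ c.top)
    (by
      rintro ⟨x, b⟩
      constructor
      · rintro ⟨h1, h2⟩
        rw [cb] at h1
        rw [ct] at h2
        rcases x with _ | _ | i
        · exact (h1 rfl).elim
        · exact (h2 rfl).elim
        · exact ⟨_, hφpt i b⟩
      · rintro ⟨a, ha⟩
        have := hφr a
        rw [ha] at this
        exact this) E (fun e he => ⟨(hE e he).1, (hE e he).2.1⟩) hdeg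
    (fun a b => hconn _ _ (hφr a) (hφr b))
  have good1 : ∀ a b : V, CfComb.rel E (fun _ => none) (φ a) (φ b) → c.Good (φ a) (φ b) := by
    rintro a b (h | h | ⟨_, h, _⟩)
    · exact Or.inl h
    · exact Or.inr (hE _ h).2.2
    · simp at h
  have good : ∀ a b : V, T.Adj a b → ∃ a' b' : V, c.Good (φ a') (φ b') ∧
      ({(a : ℝ × ℝ), (b : ℝ × ℝ)} : Set (ℝ × ℝ)) = {(a' : ℝ × ℝ), (b' : ℝ × ℝ)} ∧
      segment ℝ (a : ℝ × ℝ) (b : ℝ × ℝ) = segment ℝ (a' : ℝ × ℝ) (b' : ℝ × ℝ) := by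
    intro a b h
    rcases hTr a b h with h | h
    · exact ⟨a, b, good1 _ _ h, rfl, rfl⟩
    · exact ⟨b, a, good1 _ _ h, Set.pair_comm _ _, segment_symm _ _ _⟩
  have on : ∀ (a b : V) (q : ℝ × ℝ), c.Good (φ a) (φ b) →
      q ∈ segment ℝ (a : ℝ × ℝ) (b : ℝ × ℝ) → c.On (φ a) (φ b) (Cf.xi ε q) q.2 := by
    intro a b q g hq
    have lt := g.lt
    rw [hφX, hφX] at lt
    have := Cf.seg_on lt hq
    simp only [Cf.On, hφX, hφY]
    exact this
  have back : ∀ (a b v : V), v = a ∨ v = b → (v : ℝ × ℝ) ∈ ({(a : ℝ × ℝ), (b : ℝ × ℝ)} : Set (ℝ × ℝ)) := by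
    rintro a b v (rfl | rfl) <;> simp
  refine ⟨T, hT, ?_, hTd, ?_, ?_⟩
  · intro s hs
    refine ⟨hV1 s hs, hV2 s hs, ?_⟩
    have h := hTs ⟨pt ⟨s, hs⟩ false, hptV _ _⟩ ⟨pt ⟨s, hs⟩ true, hptV _ _⟩ _ (hφpt _ _) (hφpt _ _)
    rcases hpt ⟨s, hs⟩ with ⟨h1, h2, _⟩ | ⟨h1, h2, _⟩
    · simp only [h1, h2] at h; exact h
    · simp only [h1, h2] at h; exact h.symm
  · intro a b d e hab hde hne q hq
    obtain ⟨a', b', g, p1, s1⟩ := good a b hab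
    obtain ⟨d', e', g', p2, s2⟩ := good d e hde
    rw [p1, p2] at hne ⊢
    rw [s1, s2] at hq
    rcases g.cross g' (hφr _) (hφr _) (hφr _) (hφr _) (on _ _ _ g hq.1) (on _ _ _ g' hq.2) with
      ⟨k1, k2⟩ | ⟨v, k1, k2, k3, k4⟩
    · exact (hne (by rw [hφ k1, hφ k2])).elim
    · obtain ⟨m, hm⟩ : ∃ m, φ m = v := by
        rcases k1 with k | k
        · exact ⟨a', k.symm⟩
        · exact ⟨b', k.symm⟩
      subst hm
      have hqm : q = (m : ℝ × ℝ) := by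
        rw [hφX] at k3
        rw [hφY] at k4
        exact Cf.xi_ext k3 k4
      rw [hqm]
      exact ⟨back _ _ _ (k1.imp (fun h => hφ h) (fun h => hφ h)),
        back _ _ _ (k2.imp (fun h => hφ h) (fun h => hφ h))⟩
  · intro a b hab v hv
    obtain ⟨a', b', g, p1, s1⟩ := good a b hab
    rw [s1] at hv
    have o := on _ _ _ g hv
    rw [← hφX, ← hφY] at o
    have := back _ _ _ ((g.vert (hφr _) (hφr _) (hφr _) o).imp (fun h => hφ h) (fun h => hφ h))
    rw [← p1] at this
    simpa using this
end

section
/- Let P be a positively oriented simple polygon with vertex sequence p : ZMod m → ℝ², and let i be an index such that the x-coordinate of p i is strictly smaller than the x-coordinate of every other vertex of P, and such that p (i−1), p i, p (i+1) are not collinear. Then the vertex p i is convex, i.e., the cross product (p i − p (i−1)) × (p (i+1) − p i) is positive. -/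
open Set

noncomputable section

/-- A point in the plane. -/
abbrev Pt := ℝ × ℝ

/-- Cross product of two plane vectors. -/
def cross (u w : Pt) : ℝ := u.1 * w.2 - u.2 * w.1

/-- A simple polygon on `m` vertices: an injective vertex sequence indexed by `ZMod m`
such that consecutive boundary edges meet exactly in their common endpoint and
non-consecutive boundary edges are disjoint. -/
structure SimplePolygon (m : ℕ) where
  p : ZMod m → Pt
  inj : Function.Injective p
  consec : ∀ i : ZMod m,
    segment ℝ (p i) (p (i + 1)) ∩ segment ℝ (p (i + 1)) (p (i + 1 + 1)) = {p (i + 1)}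
  disj : ∀ i j : ZMod m, i ≠ j → i + 1 ≠ j → j + 1 ≠ i →
    segment ℝ (p i) (p (i + 1)) ∩ segment ℝ (p j) (p (j + 1)) = ∅

namespace SimplePolygon

variable {m : ℕ} (P : SimplePolygon m)

/-- The `i`-th closed boundary edge. -/
def edge (i : ZMod m) : Set Pt := segment ℝ (P.p i) (P.p (i + 1))

/-- The boundary of the polygon: the union of its edges. -/
def boundary : Set Pt := ⋃ i : ZMod m, P.edge i

/-- The open bounded region enclosed by the polygon: the union of the bounded
connected components of the complement of the boundary. -/
def openRegion : Set Pt :=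
  {x | x ∉ P.boundary ∧ Bornology.IsBounded (connectedComponentIn P.boundaryᶜ x)}

/-- The set of vertices of the polygon. -/
def vertexSet : Set Pt := Set.range P.p

/-- The signed area of the polygon (shoelace formula). -/
def signedArea : ℝ :=
  (1 / 2) * ∑ i ∈ Finset.range m,
    ((P.p (i : ZMod m)).1 * (P.p ((i : ZMod m) + 1)).2
      - (P.p ((i : ZMod m) + 1)).1 * (P.p (i : ZMod m)).2)

/-- The polygon is positively (counterclockwise) oriented. -/
def PosOriented : Prop := 0 < P.signedArea

/-- For a positively oriented polygon: the vertex `p i` is reflex. -/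
def IsReflex (i : ZMod m) : Prop :=
  cross (P.p i - P.p (i - 1)) (P.p (i + 1) - P.p i) < 0

/-- The set of reflex vertices (as points of the plane). -/
def reflexSet : Set Pt := {x | ∃ i : ZMod m, P.IsReflex i ∧ x = P.p i}

end SimplePolygon


namespace LVC

open Filter Topology

variable {m : ℕ} (P : SimplePolygon m)

def ly (j : ZMod m) (x : ℝ) : ℝ :=
  (P.p j).2 + (x - (P.p j).1) * (((P.p (j + 1)).2 - (P.p j).2) / ((P.p (j + 1)).1 - (P.p j).1))

def hh (a x : ℝ) : ℝ := if a ≤ x then 1 else 0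

def bb (a b : ℝ) : ℝ := if a < b then 1 else 0

def sg (j : ZMod m) (x : ℝ) : ℝ := hh (P.p (j + 1)).1 x - hh (P.p j).1 x

def GG [NeZero m] (e : ZMod m) (x : ℝ) : ℝ :=
  ∑ f, sg P f x * bb (ly P e x) (ly P f x) + bb (P.p (e + 1)).1 (P.p e).1

/-- closed range -/
def inC (f : ZMod m) (x : ℝ) : Prop :=
  ((P.p f).1 ≤ x ∧ x ≤ (P.p (f + 1)).1) ∨ ((P.p (f + 1)).1 ≤ x ∧ x ≤ (P.p f).1)

/-- open range -/
def inO (f : ZMod m) (x : ℝ) : Prop :=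
  ((P.p f).1 < x ∧ x < (P.p (f + 1)).1) ∨ ((P.p (f + 1)).1 < x ∧ x < (P.p f).1)

def NV : Prop := ∀ j, (P.p j).1 ≠ (P.p (j + 1)).1

variable {P}

lemma ly_left (j : ZMod m) : ly P j (P.p j).1 = (P.p j).2 := by simp [ly]

lemma ly_right (hv : NV P) (j : ZMod m) : ly P j (P.p (j + 1)).1 = (P.p (j + 1)).2 := by
  have : (P.p (j + 1)).1 - (P.p j).1 ≠ 0 := sub_ne_zero.2 (hv j).symm
  unfold ly; field_simp; ring

lemma ly_cont (j : ZMod m) : Continuous (ly P j) := by unfold ly; fun_prop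

lemma mem_seg (hv : NV P) {f : ZMod m} {x : ℝ} (h : inC P f x) :
    (x, ly P f x) ∈ segment ℝ (P.p f) (P.p (f + 1)) := by
  have hne : (P.p (f + 1)).1 - (P.p f).1 ≠ 0 := sub_ne_zero.2 (hv f).symm
  rw [segment_eq_image']
  refine ⟨(x - (P.p f).1) / ((P.p (f + 1)).1 - (P.p f).1), ⟨?_, ?_⟩, ?_⟩
  · rcases h with h | h
    · exact div_nonneg (by linarith) (by linarith)
    · exact div_nonneg_of_nonpos (by linarith) (by linarith)
  · rcases h with h | h
    · exact div_le_one_of_le₀ (by linarith) (by linarith)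
    · exact div_le_one_of_ge (by linarith) (by linarith)
  · ext
    · simp; field_simp; ring
    · simp [ly]; field_simp

lemma inter_edges {e f : ZMod m} (hef : e ≠ f) {q : Pt}
    (h1 : q ∈ segment ℝ (P.p e) (P.p (e + 1))) (h2 : q ∈ segment ℝ (P.p f) (P.p (f + 1))) :
    (f = e + 1 ∧ q = P.p (e + 1)) ∨ (e = f + 1 ∧ q = P.p e) := by
  by_cases a : e + 1 = f
  · subst a
    left
    have := P.consec e
    exact ⟨rfl, by simpa using this.subset ⟨h1, h2⟩⟩
  · by_cases b : f + 1 = e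
    · subst b
      right
      have := P.consec f
      exact ⟨rfl, by simpa using this.subset ⟨h2, h1⟩⟩
    · have := P.disj e f hef a b
      exact absurd (this.subset ⟨h1, h2⟩) (by simp)

lemma inC_of_inO {f : ZMod m} {x : ℝ} (h : inO P f x) : inC P f x := by
  rcases h with h | h
  · exact Or.inl ⟨h.1.le, h.2.le⟩
  · exact Or.inr ⟨h.1.le, h.2.le⟩

lemma sg_zero {f : ZMod m} {x : ℝ} (h : ¬ inC P f x) : sg P f x = 0 := by
  unfold sg hh
  unfold inC at h
  push Not at h
  split_ifs with h1 h2 h2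
  · simp
  · linarith [h.2 h1]
  · linarith [h.1 h2]
  · simp

lemma inC_closed (f : ZMod m) : IsClosed {x | inC P f x} := by
  have : {x | inC P f x} = Icc (P.p f).1 (P.p (f+1)).1 ∪ Icc (P.p (f+1)).1 (P.p f).1 := by
    ext x; simp [inC]
  rw [this]; exact isClosed_Icc.union isClosed_Icc

lemma bb_ev {g1 g2 : ℝ → ℝ} (h1 : Continuous g1) (h2 : Continuous g2) {x0 : ℝ}
    (hne : g1 x0 ≠ g2 x0) : ∀ᶠ x in 𝓝 x0, bb (g1 x) (g2 x) = bb (g1 x0) (g2 x0) := by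
  rcases lt_or_gt_of_ne hne with h | h
  · filter_upwards [h1.continuousAt.eventually_lt h2.continuousAt h] with x hx
    simp [bb, hx, h]
  · filter_upwards [h2.continuousAt.eventually_lt h1.continuousAt h] with x hx
    simp [bb, hx.le.not_gt, h.le.not_gt]

lemma hh_ev {a x0 : ℝ} (h : a ≠ x0) : ∀ᶠ x in 𝓝 x0, hh a x = hh a x0 := by
  rcases lt_or_gt_of_ne h with h | h
  · filter_upwards [lt_mem_nhds h] with x hx
    simp [hh, hx.le, h.le]
  · filter_upwards [gt_mem_nhds h] with x hx
    simp [hh, hx.not_ge, h.not_ge]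

variable [NeZero m]

lemma sum_shift (g : ZMod m → ℝ) : ∑ j, g (j + 1) = ∑ j, g j :=
  Equiv.sum_comp (Equiv.addRight (1 : ZMod m)) g

/-- Lemma A -/
lemma phi_ev (hv : NV P) (x0 y0 : ℝ) :
    ∀ᶠ x in 𝓝 x0, ∑ f, sg P f x * bb y0 (ly P f x0) = ∑ f, sg P f x0 * bb y0 (ly P f x0) := by
  have key : ∀ x, ∑ f, sg P f x * bb y0 (ly P f x0) =
      ∑ f, hh (P.p (f + 1)).1 x * (bb y0 (ly P f x0) - bb y0 (ly P (f + 1) x0)) := by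
    intro x
    have := sum_shift (fun f => hh (P.p f).1 x * bb y0 (ly P f x0))
    simp only [sg, sub_mul, mul_sub, Finset.sum_sub_distrib]
    rw [this]
  simp only [key]
  have : ∀ f : ZMod m, ∀ᶠ x in 𝓝 x0,
      hh (P.p (f + 1)).1 x * (bb y0 (ly P f x0) - bb y0 (ly P (f + 1) x0)) =
      hh (P.p (f + 1)).1 x0 * (bb y0 (ly P f x0) - bb y0 (ly P (f + 1) x0)) := by
    intro f
    by_cases h : (P.p (f + 1)).1 = x0
    · subst h
      rw [ly_right hv, ly_left]; simp
    · filter_upwards [hh_ev h] with x hx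
      rw [hx]
  filter_upwards [eventually_all.2 this] with x hx
  exact Finset.sum_congr rfl fun f _ => hx f

/-- Lemma B -/
lemma term_ev (e f : ZMod m) (x0 : ℝ) (h : inC P f x0 → ly P e x0 ≠ ly P f x0) :
    ∀ᶠ x in 𝓝 x0, sg P f x * bb (ly P e x) (ly P f x) =
      sg P f x * bb (ly P e x0) (ly P f x0) := by
  by_cases hc : inC P f x0
  · filter_upwards [bb_ev (ly_cont e) (ly_cont f) (h hc)] with x hx
    rw [hx]
  · filter_upwards [(inC_closed (P := P) f).isOpen_compl.mem_nhds hc] with x hx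
    rw [sg_zero hx]; simp

lemma ne_of_inO (hv : NV P) {e f : ZMod m} (hef : e ≠ f) {x : ℝ} (h : inO P e x)
    (hc : inC P f x) : ly P e x ≠ ly P f x := by
  intro heq
  have h1 := mem_seg hv (inC_of_inO h)
  have h2 := mem_seg hv hc
  rw [← heq] at h2
  have hx : x = (P.p (e + 1)).1 ∨ x = (P.p e).1 := by
    rcases inter_edges hef h1 h2 with ⟨_, h⟩ | ⟨_, h⟩
    · left; exact congrArg Prod.fst h
    · right; exact congrArg Prod.fst h
  unfold inO at h
  rcases hx with hx | hx <;> rcases h with h | h <;> linarith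

lemma GG_ev (hv : NV P) (e : ZMod m) {x0 : ℝ} (h : inO P e x0) :
    ∀ᶠ x in 𝓝 x0, GG P e x = GG P e x0 := by
  have h1 : ∀ f : ZMod m, ∀ᶠ x in 𝓝 x0, sg P f x * bb (ly P e x) (ly P f x) =
      sg P f x * bb (ly P e x0) (ly P f x0) := by
    intro f
    by_cases hef : e = f
    · subst hef
      exact Eventually.of_forall fun x => by simp [bb]
    · exact term_ev e f x0 (ne_of_inO hv hef h)
  filter_upwards [eventually_all.2 h1, phi_ev hv x0 (ly P e x0)] with x hx hy
  unfold GG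
  rw [← hy]
  congr 1
  exact Finset.sum_congr rfl fun f _ => hx f

lemma GG_const (hv : NV P) (e : ZMod m) {x y : ℝ} (hx : inO P e x) (hy : inO P e y) :
    GG P e x = GG P e y := by
  have hc : IsPreconnected {x | inO P e x} := by
    rcases lt_or_gt_of_ne (hv e) with h | h
    · have : {x | inO P e x} = Ioo (P.p e).1 (P.p (e+1)).1 := by
        ext z; simp only [inO, mem_setOf_eq, mem_Ioo]
        constructor
        · rintro (h | h)
          · exact h
          · exfalso; linarith
        · exact Or.inl
      rw [this]; exact isPreconnected_Ioo
    · have : {x | inO P e x} = Ioo (P.p (e+1)).1 (P.p e).1 := by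
        ext z; simp only [inO, mem_setOf_eq, mem_Ioo]
        constructor
        · rintro (h | h)
          · exfalso; linarith
          · exact h
        · exact Or.inr
      rw [this]; exact isPreconnected_Ioo
  classical
  have hcon : ContinuousOn (fun z => decide (GG P e z = GG P e y)) {x | inO P e x} := by
    intro z hz
    refine ContinuousAt.continuousWithinAt ?_
    refine continuousAt_const.congr (f := fun _ => decide (GG P e z = GG P e y)) ?_
    filter_upwards [GG_ev hv e hz] with w hw
    simp [hw]
  have := hc.constant hcon hx hy
  simpa using this

lemma vert_not_mem (hm : 3 ≤ m) (hv : NV P) {k f : ZMod m} (h1 : f ≠ k) (h2 : f ≠ k + 1)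
    (hc : inC P f (P.p (k + 1)).1) : (P.p (k + 1)).2 ≠ ly P f (P.p (k + 1)).1 := by
  intro heq
  have h := mem_seg hv hc
  rw [← heq] at h
  have hne : ∀ j : ZMod m, j ≠ j + 1 := by
    intro j hj
    exact hv j (by rw [← hj])
  rcases inter_edges h1.symm (right_mem_segment ℝ _ _) h with ⟨h3, _⟩ | ⟨_, h3⟩
  · exact h2 h3
  · exact hne k (P.inj h3).symm

lemma GG_vertex (hm : 3 ≤ m) (hv : NV P) (k : ZMod m) :
    ∃ x x', inO P k x ∧ inO P (k + 1) x' ∧ GG P k x = GG P (k + 1) x' := by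
  set x0 := (P.p (k + 1)).1 with hx0
  have hl1 : ly P k x0 = (P.p (k + 1)).2 := ly_right hv k
  have hl2 : ly P (k + 1) x0 = (P.p (k + 1)).2 := ly_left (k + 1)
  have hkk : k ≠ k + 1 := fun hj => hv k (by rw [← hj])
  have hA := phi_ev hv x0 (P.p (k + 1)).2
  set Φ := ∑ f, sg P f x0 * bb (P.p (k + 1)).2 (ly P f x0) with hΦ
  have hB : ∀ e, ly P e x0 = (P.p (k + 1)).2 → ∀ᶠ x in 𝓝 x0,
      ∀ f, f ≠ k → f ≠ k + 1 → sg P f x * bb (ly P e x) (ly P f x) =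
      sg P f x * bb (P.p (k + 1)).2 (ly P f x0) := by
    intro e he
    refine eventually_all.2 fun f => ?_
    by_cases h1 : f = k
    · simp [h1]
    by_cases h2 : f = k + 1
    · simp [h2]
    filter_upwards [term_ev e f x0 (fun hc => by rw [he]; exact vert_not_mem hm hv h1 h2 hc)]
      with x hx _ _
    rw [hx, he]
  have split : ∀ g : ZMod m → ℝ, ∑ f, g f = g k + g (k + 1) +
      ∑ f ∈ (Finset.univ.erase k).erase (k + 1), g f := by
    intro g
    rw [← Finset.add_sum_erase _ _ (Finset.mem_univ k),
      ← Finset.add_sum_erase (Finset.univ.erase k) _ (a := k + 1) (by simp [hkk.symm]), add_assoc]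
  have hG : ∀ e, ly P e x0 = (P.p (k + 1)).2 → ∀ᶠ x in 𝓝 x0,
      GG P e x = Φ + sg P k x * bb (ly P e x) (ly P k x)
        + sg P (k + 1) x * bb (ly P e x) (ly P (k + 1) x) + bb (P.p (e + 1)).1 (P.p e).1 := by
    intro e he
    filter_upwards [hA, hB e he] with x hx hy
    unfold GG
    rw [← hx, split, split (fun f => sg P f x * bb (P.p (k + 1)).2 (ly P f x0)), hl1, hl2]
    rw [Finset.sum_congr rfl (g := fun f => sg P f x * bb (P.p (k + 1)).2 (ly P f x0))]
    · simp [bb]; ring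
    · intro f hf
      simp only [Finset.mem_erase] at hf
      exact hy f hf.2.1 hf.1
  have hall := (hG k hl1).and (hG (k + 1) hl2)
  have hR : ∀ b, x0 < b → ∃ x, x0 < x ∧ x < b ∧ _ := fun b hb =>
    (((hall.filter_mono nhdsWithin_le_nhds).and (Ioo_mem_nhdsGT hb)).exists.imp
      fun x hx => ⟨hx.2.1, hx.2.2, hx.1⟩)
  have hL : ∀ b, b < x0 → ∃ x, b < x ∧ x < x0 ∧ _ := fun b hb =>
    (((hall.filter_mono nhdsWithin_le_nhds).and (Ioo_mem_nhdsLT hb)).exists.imp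
      fun x hx => ⟨hx.2.1, hx.2.2, hx.1⟩)
  have v1 := hv k
  have v2 := hv (k + 1)
  rw [← hx0] at v1 v2
  rcases lt_or_gt_of_ne v1 with a | a <;> rcases lt_or_gt_of_ne v2 with b | b
  · obtain ⟨x, q1, q2, q3, -⟩ := hL _ a
    obtain ⟨x', r1, r2, -, r3⟩ := hR _ b
    refine ⟨x, x', Or.inl ⟨q1, q2⟩, Or.inl ⟨r1, r2⟩, ?_⟩
    have s1 : sg P (k + 1) x = 0 := sg_zero (by
      rintro (h | h) <;> linarith)
    have s2 : sg P k x' = 0 := sg_zero (by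
      rintro (h | h) <;> linarith)
    rw [q3, r3, s1, s2]
    simp [bb, a.not_gt, b.not_gt, ← hx0]
  · obtain ⟨x, q0, q2, q3, r3⟩ := hL _ (max_lt a b)
    obtain ⟨q1, q1'⟩ := max_lt_iff.1 q0
    have i1 : inO P k x := Or.inl ⟨q1, q2⟩
    have i2 : inO P (k + 1) x := Or.inr ⟨q1', q2⟩
    refine ⟨x, x, i1, i2, ?_⟩
    have hne := ne_of_inO hv hkk i1 (inC_of_inO i2)
    rw [q3, r3]
    rcases lt_or_gt_of_ne hne with h | h <;>
    simp [bb, sg, hh, a, b, a.not_gt, b.not_gt, ← hx0, h, h.not_gt, q1.le, q1'.le, q2.not_ge]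
  · obtain ⟨x, q2, q0, q3, r3⟩ := hR _ (lt_min a b)
    obtain ⟨q1, q1'⟩ := lt_min_iff.1 q0
    have i1 : inO P k x := Or.inr ⟨q2, q1⟩
    have i2 : inO P (k + 1) x := Or.inl ⟨q2, q1'⟩
    refine ⟨x, x, i1, i2, ?_⟩
    have hne := ne_of_inO hv hkk i1 (inC_of_inO i2)
    rw [q3, r3]
    rcases lt_or_gt_of_ne hne with h | h <;>
    simp [bb, sg, hh, a, b, a.not_gt, b.not_gt, ← hx0, h, h.not_gt, q1.not_ge, q1'.not_ge, q2.le]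
  · obtain ⟨x, q1, q2, q3, -⟩ := hR _ a
    obtain ⟨x', r1, r2, -, r3⟩ := hL _ b
    refine ⟨x, x', Or.inr ⟨q1, q2⟩, Or.inr ⟨r1, r2⟩, ?_⟩
    have s1 : sg P (k + 1) x = 0 := sg_zero (by
      rintro (h | h) <;> linarith)
    have s2 : sg P k x' = 0 := sg_zero (by
      rintro (h | h) <;> linarith)
    rw [q3, r3, s1, s2]
    simp [bb, a, b, ← hx0]

lemma GG_all (hm : 3 ≤ m) (hv : NV P) (i : ZMod m) (c x : ℝ) (hx : inO P i x)
    (h : GG P i x = c) (e : ZMod m) (y : ℝ) (hy : inO P e y) : GG P e y = c := by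
  have : ∀ n : ℕ, ∀ y, inO P (i + n) y → GG P (i + n) y = c := by
    intro n
    induction n with
    | zero => intro y hy; simp only [Nat.cast_zero, add_zero] at *; rw [← h]; exact GG_const hv _ hy hx
    | succ n ih =>
      intro y hy
      obtain ⟨z, z', h1, h2, h3⟩ := GG_vertex hm hv (i + n)
      push_cast at *
      rw [← add_assoc] at *
      rw [GG_const hv _ hy h2, ← h3, ih z h1]
  have h2 := this (e - i).val y
  rw [ZMod.natCast_zmod_val, add_sub_cancel] at h2
  exact h2 hy

lemma GG_base (hv : NV P) (i : ZMod m)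
    (hmin : ∀ j : ZMod m, j ≠ i → (P.p i).1 < (P.p j).1)
    (hneg : cross (P.p i - P.p (i - 1)) (P.p (i + 1) - P.p i) < 0) :
    ∃ x, inO P i x ∧ GG P i x = 0 := by
  have hne : ∀ j : ZMod m, j ≠ j + 1 := fun j hj => hv j (by rw [← hj])
  have hev : ∀ᶠ x in 𝓝[>] (P.p i).1, ∀ j : ZMod m, j ≠ i → x < (P.p j).1 := by
    refine eventually_all.2 fun j => ?_
    by_cases h : j = i
    · simp [h]
    · filter_upwards [Ioo_mem_nhdsGT (hmin j h)] with x hx _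
      exact hx.2
  obtain ⟨x, hx, hxi⟩ := (hev.and self_mem_nhdsWithin).exists
  replace hxi : (P.p i).1 < x := hxi
  have h1 := hx (i + 1) (hne i).symm
  have hne' : i - 1 ≠ i := by
    have := hne (i - 1); rwa [sub_add_cancel] at this
  have h0 := hx (i - 1) hne'
  refine ⟨x, Or.inl ⟨hxi, h1⟩, ?_⟩
  unfold GG
  have hb : bb (P.p (i + 1)).1 (P.p i).1 = 0 := by simp [bb, (hxi.trans h1).le]
  rw [hb, add_zero]
  refine Finset.sum_eq_zero fun f _ => ?_
  by_cases hf : f = i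
  · subst hf; simp [bb]
  by_cases hf' : f + 1 = i
  · have : f = i - 1 := by rw [← hf']; ring
    subst this
    have hlt : ly P (i - 1) x < ly P i x := by
      have e1 : ly P (i - 1) x = (P.p i).2 + (x - (P.p i).1) *
          (((P.p (i - 1)).2 - (P.p i).2) / ((P.p (i - 1)).1 - (P.p i).1)) := by
        unfold ly
        rw [sub_add_cancel]
        have h2 : (P.p (i - 1)).1 - (P.p i).1 ≠ 0 := by intro h; linarith
        have h3 : (P.p i).1 - (P.p (i - 1)).1 ≠ 0 := by intro h; linarith
        field_simp
        ring
      rw [e1]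
      unfold ly
      gcongr ?_ + ?_
      refine mul_lt_mul_of_pos_left ?_ (by linarith)
      rw [div_lt_div_iff₀ (by linarith) (by linarith)]
      simp only [cross, Prod.fst_sub, Prod.snd_sub] at hneg
      linarith
    simp [bb, hlt.le]
  · have : sg P f x = 0 := by
      simp [sg, hh, (hx f hf).not_ge, (hx _ hf').not_ge]
    rw [this, zero_mul]

/-- superlevel sums are nonpositive -/
lemma level (hv : NV P) (hall : ∀ e y, inO P e y → GG P e y = 0) (x : ℝ)
    (hx : ∀ j, (P.p j).1 ≠ x) (t : ℝ) : ∑ f, sg P f x * bb t (ly P f x) ≤ 0 := by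
  classical
  have hO : ∀ f, inC P f x → inO P f x := by
    intro f h
    have h1 := hx f
    have h2 := hx (f + 1)
    rcases h with h | h
    · exact Or.inl ⟨lt_of_le_of_ne h.1 h1, lt_of_le_of_ne h.2 h2.symm⟩
    · exact Or.inr ⟨lt_of_le_of_ne h.1 h2, lt_of_le_of_ne h.2 h1.symm⟩
  let S := Finset.univ.filter fun f : ZMod m => inC P f x ∧ t < ly P f x
  rcases S.eq_empty_or_nonempty with hS | hS
  · refine (Finset.sum_eq_zero fun f _ => ?_).le
    by_cases hc : inC P f x
    · have : f ∉ S := by rw [hS]; simp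
      simp only [S, Finset.mem_filter, Finset.mem_univ, true_and, not_and] at this
      simp [bb, this hc]
    · simp [sg_zero hc]
  · obtain ⟨e, heS, hemin⟩ := S.exists_min_image (fun f => ly P f x) hS
    simp only [S, Finset.mem_filter, Finset.mem_univ, true_and] at heS hemin
    have heO := hO e heS.1
    have hG := hall e x heO
    unfold GG at hG
    have : ∑ f, sg P f x * bb t (ly P f x) =
        ∑ f, sg P f x * bb (ly P e x) (ly P f x) + sg P e x := by
      rw [← Finset.add_sum_erase _ _ (Finset.mem_univ e),
        ← Finset.add_sum_erase _ (fun f => sg P f x * bb (ly P e x) (ly P f x)) (Finset.mem_univ e)]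
      have h3 : ∑ f ∈ Finset.univ.erase e, sg P f x * bb t (ly P f x) =
          ∑ f ∈ Finset.univ.erase e, sg P f x * bb (ly P e x) (ly P f x) := by
        refine Finset.sum_congr rfl fun f hf => ?_
        simp only [Finset.mem_erase, Finset.mem_univ, and_true] at hf
        by_cases hc : inC P f x
        · have hn := ne_of_inO hv (Ne.symm hf) heO hc
          by_cases ht : t < ly P f x
          · have := lt_of_le_of_ne (hemin f ⟨hc, ht⟩) hn
            simp [bb, ht, this]
          · have : ¬ ly P e x < ly P f x := by intro h; linarith [heS.2]
            simp [bb, ht, this]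
        · simp [sg_zero hc]
      rw [h3]
      simp [bb, heS.2]; ring
    rw [this]
    rcases heO with h | h
    · have h4 : sg P e x = -1 := by simp [sg, hh, h.1.le, h.2.not_ge]
      have h5 : bb (P.p (e + 1)).1 (P.p e).1 = 0 := by simp [bb, (h.1.trans h.2).le]
      linarith
    · have h4 : sg P e x = 1 := by simp [sg, hh, h.1.le, h.2.not_ge]
      have h5 : bb (P.p (e + 1)).1 (P.p e).1 = 1 := by simp [bb, (h.1.trans h.2)]
      linarith

lemma hh_int {g : ℝ → ℝ} (hg : Continuous g) {a A B : ℝ} :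
    IntervalIntegrable (fun x => hh a x * g x) MeasureTheory.volume A B := by
  have : (fun x => hh a x * g x) = (Ici a).indicator g := by
    ext x; simp [hh, indicator]
  rw [this, intervalIntegrable_iff]
  exact (intervalIntegrable_iff.1 (hg.intervalIntegrable A B)).indicator measurableSet_Ici

lemma hh_integral {g : ℝ → ℝ} (hg : Continuous g) {a A B : ℝ} (h1 : A ≤ a) (h2 : a ≤ B) :
    ∫ x in A..B, hh a x * g x = ∫ x in a..B, g x := by
  rw [← intervalIntegral.integral_add_adjacent_intervals (b := a) (hh_int hg) (hh_int hg)]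
  have e1 : ∫ x in A..a, hh a x * g x = 0 := by
    apply intervalIntegral.integral_zero_ae
    have : ∀ᵐ x : ℝ, x ≠ a := by simp [MeasureTheory.ae_iff]
    filter_upwards [this] with x hx hx'
    rw [uIoc_of_le h1] at hx'
    have := lt_of_le_of_ne hx'.2 hx
    simp [hh, this]
  have e2 : ∫ x in a..B, hh a x * g x = ∫ x in a..B, g x := by
    apply intervalIntegral.integral_congr
    intro x hx
    rw [uIcc_of_le h2] at hx
    simp [hh, hx.1]
  rw [e1, e2, zero_add]

lemma abel {ι : Type*} [Fintype ι] (s y : ι → ℝ) (h0 : ∑ f, s f = 0)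
    (hl : ∀ t, ∑ f, s f * bb t (y f) ≤ 0) : ∑ f, s f * y f ≤ 0 := by
  obtain ⟨M, hM⟩ := (Set.finite_range y).bddBelow
  obtain ⟨K, hK⟩ := (Set.finite_range y).bddAbove
  by_cases hne : IsEmpty ι
  · simp
  rw [not_isEmpty_iff] at hne
  obtain ⟨i0⟩ := hne
  have hMK : M ≤ K := (hM ⟨i0, rfl⟩).trans (hK ⟨i0, rfl⟩)
  have hbb : ∀ f, (fun t => bb t (y f)) = fun t => 1 - hh (y f) t * 1 := by
    intro f; ext t
    by_cases h : t < y f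
    · simp [bb, hh, h, h.not_ge]
    · simp [bb, hh, h, not_lt.1 h]
  have hint : ∀ f, IntervalIntegrable (fun t => bb t (y f)) MeasureTheory.volume M K := by
    intro f
    rw [hbb]
    exact (continuous_const.intervalIntegrable _ _).sub (hh_int continuous_const)
  have hval : ∀ f, ∫ t in M..K, bb t (y f) = y f - M := by
    intro f
    rw [hbb, intervalIntegral.integral_sub (continuous_const.intervalIntegrable _ _)
      (hh_int continuous_const), hh_integral continuous_const (hM ⟨f, rfl⟩) (hK ⟨f, rfl⟩)]
    simp
  have h1 : ∑ f, s f * y f = ∫ t in M..K, ∑ f, s f * bb t (y f) := by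
    rw [intervalIntegral.integral_finsetSum fun f _ => (hint f).const_mul _]
    simp only [intervalIntegral.integral_const_mul, hval, mul_sub, Finset.sum_sub_distrib,
      ← Finset.sum_mul, h0]
    simp
  rw [h1]
  have := intervalIntegral.integral_nonneg (μ := MeasureTheory.volume) hMK
    (f := fun t => -∑ f, s f * bb t (y f)) (fun t _ => by have := hl t; linarith)
  rw [intervalIntegral.integral_neg] at this
  linarith

lemma ly_integral (hv : NV P) (f : ZMod m) :
    ∫ x in (P.p (f + 1)).1..(P.p f).1, ly P f x =
      ((P.p f).1 - (P.p (f + 1)).1) * ((P.p f).2 + (P.p (f + 1)).2) / 2 := by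
  have hne : (P.p (f + 1)).1 - (P.p f).1 ≠ 0 := sub_ne_zero.2 (hv f).symm
  unfold ly
  rw [intervalIntegral.integral_add (Continuous.intervalIntegrable (by fun_prop) _ _)
    (Continuous.intervalIntegrable (by fun_prop) _ _),
    intervalIntegral.integral_mul_const, intervalIntegral.integral_sub
    (Continuous.intervalIntegrable (by fun_prop) _ _)
    (Continuous.intervalIntegrable (by fun_prop) _ _)]
  simp
  field_simp
  ring

lemma area_eq : P.signedArea = 1 / 2 * ∑ f : ZMod m,
    ((P.p f).1 * (P.p (f + 1)).2 - (P.p (f + 1)).1 * (P.p f).2) := by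
  unfold SimplePolygon.signedArea
  congr 1
  refine Finset.sum_nbij' (fun n => (n : ZMod m)) ZMod.val ?_ ?_ ?_ ?_ ?_
  · simp
  · intro a _; simpa using ZMod.val_lt a
  · intro a ha; exact ZMod.val_cast_of_lt (by simpa using ha)
  · intro a _; simp
  · intro a _; rfl

lemma area_nonpos (hv : NV P) (hall : ∀ e y, inO P e y → GG P e y = 0) : P.signedArea ≤ 0 := by
  obtain ⟨A, hA⟩ := (Set.finite_range fun j => (P.p j).1).bddBelow
  obtain ⟨B, hB⟩ := (Set.finite_range fun j => (P.p j).1).bddAbove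
  replace hA : ∀ j, A ≤ (P.p j).1 := fun j => hA ⟨j, rfl⟩
  replace hB : ∀ j, (P.p j).1 ≤ B := fun j => hB ⟨j, rfl⟩
  have hAB : A ≤ B := (hA 0).trans (hB 0)
  have hint : ∀ f, IntervalIntegrable (fun x => sg P f x * ly P f x) MeasureTheory.volume A B := by
    intro f
    simp only [sg, sub_mul]
    exact (hh_int (ly_cont f)).sub (hh_int (ly_cont f))
  have hval : ∀ f, ∫ x in A..B, sg P f x * ly P f x =
      ((P.p f).1 - (P.p (f + 1)).1) * ((P.p f).2 + (P.p (f + 1)).2) / 2 := by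
    intro f
    rw [← ly_integral hv f]
    simp only [sg, sub_mul]
    rw [intervalIntegral.integral_sub (hh_int (ly_cont f)) (hh_int (ly_cont f)),
      hh_integral (ly_cont f) (hA _) (hB _), hh_integral (ly_cont f) (hA _) (hB _), sub_eq_iff_eq_add]
    exact (intervalIntegral.integral_add_adjacent_intervals
      ((ly_cont f).intervalIntegrable _ _) ((ly_cont f).intervalIntegrable _ _)).symm
  have h1 : P.signedArea = ∫ x in A..B, ∑ f, sg P f x * ly P f x := by
    rw [intervalIntegral.integral_finsetSum fun f _ => hint f, area_eq]
    simp only [hval]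
    have hs := sum_shift (fun f => (P.p f).1 * (P.p f).2)
    have : ∑ f, ((P.p f).1 - (P.p (f + 1)).1) * ((P.p f).2 + (P.p (f + 1)).2) / 2 =
      1 / 2 * (∑ f, ((P.p f).1 * (P.p (f + 1)).2 - (P.p (f + 1)).1 * (P.p f).2) +
        (∑ f, (P.p f).1 * (P.p f).2 - ∑ f, (P.p (f + 1)).1 * (P.p (f + 1)).2)) := by
      rw [← Finset.sum_sub_distrib, ← Finset.sum_add_distrib, Finset.mul_sum]
      exact Finset.sum_congr rfl fun f _ => by ring
    rw [this, hs]; ring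
  rw [h1]
  have hae : ∀ᵐ x : ℝ, ∀ j, (P.p j).1 ≠ x := by
    rw [MeasureTheory.ae_all_iff]
    intro j
    simp [MeasureTheory.ae_iff]
  have := intervalIntegral.integral_nonneg_of_ae (μ := MeasureTheory.volume) hAB
    (f := fun x => -∑ f, sg P f x * ly P f x) (by
      filter_upwards [hae] with x hx
      have := abel (fun f => sg P f x) (fun f => ly P f x) (by
        simp only [sg, Finset.sum_sub_distrib]
        rw [sum_shift (fun f => hh (P.p f).1 x), sub_self]) (level hv hall x hx)
      simpa using this)
  rw [intervalIntegral.integral_neg] at this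
  linarith

lemma main_nv (hm : 3 ≤ m) (hv : NV P) (i : ZMod m)
    (hmin : ∀ j : ZMod m, j ≠ i → (P.p i).1 < (P.p j).1)
    (hneg : cross (P.p i - P.p (i - 1)) (P.p (i + 1) - P.p i) < 0) : P.signedArea ≤ 0 := by
  obtain ⟨x, h1, h2⟩ := GG_base hv i hmin hneg
  exact area_nonpos hv (GG_all hm hv i 0 x h1 h2)

def shl (ε : ℝ) : Pt →ₗ[ℝ] Pt where
  toFun q := (q.1 + ε * q.2, q.2)
  map_add' a b := by ext <;> simp; ring
  map_smul' c a := by ext <;> simp; ring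

lemma shl_inj (ε : ℝ) : Function.Injective (shl ε) := by
  intro a b h
  simp only [shl, LinearMap.coe_mk, AddHom.coe_mk, Prod.mk.injEq] at h
  obtain ⟨h1, h2⟩ := h
  rw [h2] at h1
  exact Prod.ext (by linarith) h2

lemma seg_shl (ε : ℝ) (a b : Pt) : segment ℝ (shl ε a) (shl ε b) = shl ε '' segment ℝ a b :=
  (image_segment ℝ (shl ε).toAffineMap a b).symm

def sheared (P : SimplePolygon m) (ε : ℝ) : SimplePolygon m where
  p j := shl ε (P.p j)
  inj := (shl_inj ε).comp P.inj
  consec i := by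
    simp only [seg_shl]
    rw [← image_inter (shl_inj ε), P.consec, image_singleton]
  disj i j h1 h2 h3 := by
    simp only [seg_shl]
    rw [← image_inter (shl_inj ε), P.disj i j h1 h2 h3, image_empty]

lemma sheared_area (ε : ℝ) : (sheared P ε).signedArea = P.signedArea := by
  unfold SimplePolygon.signedArea
  congr 1
  refine Finset.sum_congr rfl fun f _ => ?_
  simp [sheared, shl]; ring

lemma main_neg (hm : 3 ≤ m) (i : ZMod m)
    (hmin : ∀ j : ZMod m, j ≠ i → (P.p i).1 < (P.p j).1)
    (hneg : cross (P.p i - P.p (i - 1)) (P.p (i + 1) - P.p i) < 0) : P.signedArea ≤ 0 := by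
  have : Fact (1 < m) := ⟨by omega⟩
  have hE1 : ∀ᶠ ε in 𝓝[≠] (0 : ℝ), ∀ j : ZMod m, j ≠ i →
      (P.p i).1 + ε * (P.p i).2 < (P.p j).1 + ε * (P.p j).2 := by
    refine Filter.Eventually.filter_mono nhdsWithin_le_nhds (eventually_all.2 fun j => ?_)
    by_cases h : j = i
    · simp [h]
    · have c1 : ContinuousAt (fun ε : ℝ => (P.p i).1 + ε * (P.p i).2) 0 := by fun_prop
      have c2 : ContinuousAt (fun ε : ℝ => (P.p j).1 + ε * (P.p j).2) 0 := by fun_prop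
      filter_upwards [c1.eventually_lt c2 (by simpa using hmin j h)] with ε hε _
      exact hε
  have hE2 : ∀ᶠ ε in 𝓝[≠] (0 : ℝ), ∀ j : ZMod m,
      (P.p j).1 + ε * (P.p j).2 ≠ (P.p (j + 1)).1 + ε * (P.p (j + 1)).2 := by
    refine eventually_all.2 fun j => ?_
    by_cases h : (P.p j).1 = (P.p (j + 1)).1
    · filter_upwards [self_mem_nhdsWithin] with ε hε heq
      rw [h] at heq
      have h2 := mul_left_cancel₀ hε (add_left_cancel heq)
      have := P.inj (Prod.ext h h2)
      simp at this
    · have c1 : ContinuousAt (fun ε : ℝ => (P.p j).1 + ε * (P.p j).2) 0 := by fun_prop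
      have c2 : ContinuousAt (fun ε : ℝ => (P.p (j + 1)).1 + ε * (P.p (j + 1)).2) 0 := by fun_prop
      exact ((c1.ne_iff_eventually_ne c2).1 (by simpa using h)).filter_mono nhdsWithin_le_nhds
  obtain ⟨ε, h1, h2⟩ := (hE1.and hE2).exists
  rw [← sheared_area ε]
  refine main_nv (P := sheared P ε) hm h2 i h1 ?_
  convert hneg using 1
  simp [cross, sheared, shl]; ring

end LVC

/-- **The strictly leftmost vertex of a positively oriented simple polygon is convex.**
If the `x`-coordinate of `p i` is strictly smaller than that of every other vertex and
`p (i-1), p i, p (i+1)` are not collinear, then the cross product at `p i` is positive. -/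
theorem leftmost_vertex_convex {m : ℕ} (hm : 3 ≤ m) (P : SimplePolygon m)
    (hor : P.PosOriented) (i : ZMod m)
    (hmin : ∀ j : ZMod m, j ≠ i → (P.p i).1 < (P.p j).1)
    (hcol : ¬ Collinear ℝ ({P.p (i - 1), P.p i, P.p (i + 1)} : Set Pt)) :
    0 < cross (P.p i - P.p (i - 1)) (P.p (i + 1) - P.p i) := by
  have : NeZero m := ⟨by omega⟩
  by_contra hcon
  rcases lt_or_eq_of_le (not_lt.1 hcon) with h | h
  · exact absurd hor (not_lt.2 (LVC.main_neg hm i hmin h))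
  · apply hcol
    have : Fact (1 < m) := ⟨by omega⟩
    have h1 := hmin (i + 1) (by simp)
    have hne : (P.p (i + 1)).1 - (P.p i).1 ≠ 0 := by intro h; linarith
    rw [collinear_iff_of_mem (p₀ := P.p i) (by simp)]
    refine ⟨P.p (i + 1) - P.p i, ?_⟩
    simp only [mem_insert_iff, mem_singleton_iff, forall_eq_or_imp, forall_eq]
    refine ⟨⟨((P.p (i - 1)).1 - (P.p i).1) / ((P.p (i + 1)).1 - (P.p i).1), ?_⟩, ⟨0, by simp⟩,
      ⟨1, by simp⟩⟩
    simp only [cross, Prod.fst_sub, Prod.snd_sub] at h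
    ext
    · simp; field_simp; ring
    · simp; field_simp; linarith
end
end
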